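/- arXiv:1804.10050 — 6 statements merged into one kernel-verified Lean document; each statement's English description precedes it below -/
import Mathlib

section
/- Let k ≥ 1 be an integer and ε > 0 a fixed real number. Let F be a sunflower-free k-uniform finite set system such that |⋃_{F∈F} F| ≤ k^{2.5−ε}. Then |F| ≤ 3·(⌈2k/3⌉ + 1)·(2^{1/3}·3e)^k·k^{⌈k(1 − 2ε/3)⌉}. -/
/-- Three (distinct) sets form a sunflower with 3 petals: each pairwise
intersection equals the common intersection of all three. -/
def IsThreeSunflower {α : Type*} [DecidableEq α] (A B C : Finset α) : Prop :=
  A ∩ B = A ∩ B ∩ C ∧ A ∩ C = A ∩ B ∩ C ∧ B ∩ C = A ∩ B ∩ C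

/-- A family of sets is sunflower-free if no three distinct members form a
sunflower with 3 petals. -/
def SunflowerFree {α : Type*} [DecidableEq α] (F : Finset (Finset α)) : Prop :=
  ¬ ∃ A ∈ F, ∃ B ∈ F, ∃ C ∈ F, A ≠ B ∧ A ≠ C ∧ B ≠ C ∧ IsThreeSunflower A B C

open Finset

/-- a subspace condition given by few linear functionals contains a vector of large support -/
lemma sf_exists_support {X : Type*} [Fintype X] [DecidableEq X] (V : Submodule ℚ (X → ℚ)) :
    ∃ h ∈ V, Module.finrank ℚ V ≤ (univ.filter (fun x => h x ≠ 0)).card := by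
  classical
  obtain ⟨h, hV, hmax⟩ : ∃ h ∈ V, ∀ g ∈ V,
      (univ.filter (fun x => g x ≠ 0)).card ≤ (univ.filter (fun x => h x ≠ 0)).card := by
    let s : Set ℕ := {m | ∃ g ∈ V, (univ.filter (fun x => g x ≠ 0)).card = m}
    have hne : s.Nonempty := ⟨_, 0, V.zero_mem, rfl⟩
    have hb : BddAbove s := ⟨Fintype.card X, by
      rintro m ⟨g, _, rfl⟩
      exact card_le_univ _⟩
    obtain ⟨h, hV, hh⟩ := Nat.sSup_mem hne hb
    exact ⟨h, hV, fun g hg => by rw [hh]; exact le_csSup hb ⟨g, hg, rfl⟩⟩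
  refine ⟨h, hV, ?_⟩
  by_contra hlt
  push Not at hlt
  set S := univ.filter (fun x => h x ≠ 0) with hS
  let L : V →ₗ[ℚ] (S → ℚ) := 
    { toFun := fun v s => v.1 s.1
      map_add' := fun _ _ => rfl
      map_smul' := fun _ _ => rfl }
  have hk : LinearMap.ker L ≠ ⊥ := LinearMap.ker_ne_bot_of_finrank_lt (by simpa using hlt)
  obtain ⟨v, hv, hv0⟩ := Submodule.exists_mem_ne_zero_of_ne_bot hk
  have hvS : ∀ x ∈ S, v.1 x = 0 := fun x hx => congrFun (LinearMap.mem_ker.1 hv) ⟨x, hx⟩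
  obtain ⟨x, hx⟩ : ∃ x, v.1 x ≠ 0 := by
    by_contra hh
    push Not at hh
    exact hv0 (Subtype.ext (funext hh))
  have hxS : x ∉ S := fun h => hx (hvS x h)
  have := hmax (h + v.1) (V.add_mem hV v.2)
  have h2 : insert x S ⊆ univ.filter (fun x => (h + v.1) x ≠ 0) := by
    intro y hy
    rw [mem_insert] at hy
    rcases hy with rfl | hy
    · have : h y = 0 := by simpa [hS] using hxS
      simp [this, hx]
    · have h1 := hvS y hy
      have : h y ≠ 0 := by simpa [hS] using hy
      simp [this, h1]
  have h3 := card_le_card h2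
  rw [card_insert_of_notMem hxS] at h3
  omega

lemma sf_slice {X I : Type*} [Fintype X] [Fintype I]
    (T : X → X → X → ℚ) (f : I → X → ℚ) (g1 g2 g3 : I → X → X → ℚ)
    (hT : ∀ x y z, T x y z = ∑ i, f i x * g1 i y z + ∑ i, f i y * g2 i x z + ∑ i, f i z * g3 i x y)
    (h0 : ∀ x y z, ¬ (x = y ∧ y = z) → T x y z = 0) (h1 : ∀ x, T x x x ≠ 0) :
    Fintype.card X ≤ 3 * Fintype.card I := by
  classical
  let L : (X → ℚ) →ₗ[ℚ] (I → ℚ) := ∑ x, LinearMap.pi (fun i => f i x • LinearMap.proj x)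
  have hL : ∀ h i, L h i = ∑ x, f i x * h x := by
    intro h i
    simp [L]
  obtain ⟨h, hV, hc⟩ := sf_exists_support (LinearMap.ker L)
  have hr := LinearMap.finrank_range_add_finrank_ker L
  have hr2 := Submodule.finrank_le (LinearMap.range L)
  simp only [Module.finrank_fintype_fun_eq_card] at hr hr2
  set S := univ.filter (fun x => h x ≠ 0) with hS
  by_contra hlt
  push Not at hlt
  have hI : 2 * Fintype.card I < S.card := by omega
  let M : (S → ℚ) →ₗ[ℚ] (I ⊕ I → ℚ) := ∑ y, LinearMap.pi (fun i => 
    (Sum.elim (fun i => f i y.1) (fun i => ∑ x, h x * g3 i x y.1) i) • LinearMap.proj y)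
  have hM : ∀ u i, M u i = ∑ y, 
    (Sum.elim (fun i => f i y.1) (fun i => ∑ x, h x * g3 i x y.1) i) * u y := by
    intro u i
    simp [M]
  have hk : LinearMap.ker M ≠ ⊥ := LinearMap.ker_ne_bot_of_finrank_lt (by simp; omega)
  obtain ⟨u, hu, hu0⟩ := Submodule.exists_mem_ne_zero_of_ne_bot hk
  obtain ⟨z, hz⟩ : ∃ z, u z ≠ 0 := by
    by_contra hh
    push Not at hh
    exact hu0 (funext hh)
  have hA : ∀ i, ∑ x, f i x * h x = 0 := fun i => by
    rw [← hL]; exact congrFun (LinearMap.mem_ker.1 hV) i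
  have hB : ∀ i, ∑ y, f i y.1 * u y = 0 := fun i => by
    have := congrFun (LinearMap.mem_ker.1 hu) (Sum.inl i)
    rw [hM] at this; simpa using this
  have hC : ∀ i, ∑ y : S, (∑ x, h x * g3 i x y.1) * u y = 0 := fun i => by
    have := congrFun (LinearMap.mem_ker.1 hu) (Sum.inr i)
    rw [hM] at this; simpa using this
  have e1 : ∑ y : S, ∑ x, h x * u y * T x y.1 z.1 = h z.1 * u z * T z.1 z.1 z.1 := by
    rw [sum_eq_single z, sum_eq_single z.1]
    · intro x _ hx
      rw [h0 _ _ _ (fun hh => hx hh.1), mul_zero]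
    · simp
    · intro y _ hy
      refine sum_eq_zero fun x _ => ?_
      rw [h0 _ _ _ (fun hh => hy (Subtype.ext hh.2)), mul_zero]
    · simp
  have e2 : ∑ y : S, ∑ x, h x * u y * T x y.1 z.1 = 0 := by
    have e3 : ∀ y : S, ∑ x, h x * u y * T x y.1 z.1 =
        ∑ i, (∑ x, f i x * h x) * (u y * g1 i y.1 z.1) +
        ∑ i, (f i y.1 * u y) * (∑ x, h x * g2 i x z.1) +
        ∑ i, f i z.1 * ((∑ x, h x * g3 i x y.1) * u y) := by
      intro y
      simp only [hT, mul_add, sum_add_distrib, mul_sum, sum_mul]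
      congr 1
      · congr 1
        · rw [sum_comm]; refine sum_congr rfl fun _ _ => sum_congr rfl fun _ _ => by ring
        · rw [sum_comm]; refine sum_congr rfl fun _ _ => sum_congr rfl fun _ _ => by ring
      · rw [sum_comm]; refine sum_congr rfl fun _ _ => sum_congr rfl fun _ _ => by ring
    simp only [e3, sum_add_distrib]
    have a1 : ∑ y : S, ∑ i, (∑ x, f i x * h x) * (u y * g1 i y.1 z.1) = 0 := by simp [hA]
    have a2 : ∑ y : S, ∑ i, (f i y.1 * u y) * (∑ x, h x * g2 i x z.1) = 0 := by
      rw [sum_comm]; simp only [← sum_mul, hB]; simp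
    have a3 : ∑ y : S, ∑ i, f i z.1 * ((∑ x, h x * g3 i x y.1) * u y) = 0 := by
      rw [sum_comm]; simp only [← mul_sum, hC]; simp
    rw [a1, a2, a3]; simp
  rw [e1] at e2
  have hz' : h z.1 ≠ 0 := (mem_filter.1 z.2).2
  exact mul_ne_zero (mul_ne_zero hz' hz) (h1 _) e2

/-- indicator of containment -/
def sfI {α : Type*} [DecidableEq α] (A x : Finset α) : ℚ := if A ⊆ x then 1 else 0

lemma sfI_mul {α : Type*} [DecidableEq α] (A B x : Finset α) :
    sfI A x * sfI B x = sfI (A ∪ B) x := by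
  unfold sfI
  by_cases h1 : A ⊆ x <;> by_cases h2 : B ⊆ x <;> simp [h1, h2, union_subset_iff]

/-- tensors of bounded degree -/
def sfM {α : Type*} [DecidableEq α] (G : Finset α) (d : ℕ) :
    Submodule ℚ (Finset α → Finset α → Finset α → ℚ) :=
  Submodule.span ℚ {p | ∃ A B C : Finset α, A ⊆ G ∧ B ⊆ G ∧ C ⊆ G ∧ A.card + B.card + C.card ≤ d ∧
    p = fun x y z => sfI A x * sfI B y * sfI C z}

lemma sfM_mono {α : Type*} [DecidableEq α] (G : Finset α) {d e : ℕ} (h : d ≤ e) :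
    sfM G d ≤ sfM G e := by
  apply Submodule.span_mono
  rintro p ⟨A, B, C, hA, hB, hC, hd, rfl⟩
  exact ⟨A, B, C, hA, hB, hC, hd.trans h, rfl⟩

lemma sfM_mul {α : Type*} [DecidableEq α] (G : Finset α) {d e : ℕ} 
    {p q : Finset α → Finset α → Finset α → ℚ}
    (hp : p ∈ sfM G d) (hq : q ∈ sfM G e) : p * q ∈ sfM G (d + e) := by
  unfold sfM at hp hq
  induction hp using Submodule.span_induction with
  | zero => rw [zero_mul]; exact Submodule.zero_mem _
  | add a b _ _ ha hb => rw [add_mul]; exact Submodule.add_mem _ ha hb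
  | smul c a _ ha => rw [smul_mul_assoc]; exact Submodule.smul_mem _ _ ha
  | mem p hp =>
    induction hq using Submodule.span_induction with
    | zero => rw [mul_zero]; exact Submodule.zero_mem _
    | add a b _ _ ha hb => rw [mul_add]; exact Submodule.add_mem _ ha hb
    | smul c a _ ha => rw [mul_smul_comm]; exact Submodule.smul_mem _ _ ha
    | mem q hq =>
      obtain ⟨A, B, C, hA, hB, hC, hd, rfl⟩ := hp
      obtain ⟨A', B', C', hA', hB', hC', hd', rfl⟩ := hq
      refine Submodule.subset_span ⟨A ∪ A', B ∪ B', C ∪ C', union_subset hA hA',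
        union_subset hB hB', union_subset hC hC', ?_, ?_⟩
      · have := card_union_le A A'
        have := card_union_le B B'
        have := card_union_le C C'
        omega
      · funext x y z
        simp only [Pi.mul_apply, ← sfI_mul]
        ring

/-- one factor -/
def sfP {α : Type*} [DecidableEq α] (G : Finset α) {k : ℕ} (c : α → Fin k) (j : Fin k) :
    Finset α → Finset α → Finset α → ℚ := 
  fun x y z => 1 - ∑ v ∈ G.filter (fun v => c v = j), 
    (sfI {v} x * sfI {v} y + sfI {v} y * sfI {v} z + sfI {v} x * sfI {v} z)

lemma sfI_empty {α : Type*} [DecidableEq α] (x : Finset α) : sfI ∅ x = 1 := by simp [sfI]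

lemma sfP_mem {α : Type*} [DecidableEq α] (G : Finset α) {k : ℕ} (c : α → Fin k) (j : Fin k) :
    sfP G c j ∈ sfM G 2 := by
  have : sfP G c j = (fun x y z => sfI ∅ x * sfI ∅ y * sfI ∅ z) - 
    ∑ v ∈ G.filter (fun v => c v = j), 
    ((fun x y z => sfI {v} x * sfI {v} y * sfI ∅ z) + (fun x y z => sfI ∅ x * sfI {v} y * sfI {v} z) + 
      (fun x y z => sfI {v} x * sfI ∅ y * sfI {v} z)) := by
    funext x y z
    simp [sfP, sfI_empty, Finset.sum_apply]
  rw [this]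
  refine Submodule.sub_mem _ (Submodule.subset_span ⟨∅, ∅, ∅, by simp⟩) ?_
  refine Submodule.sum_mem _ fun v hv => ?_
  have hv : {v} ⊆ G := by simpa using (mem_filter.1 hv).1
  refine Submodule.add_mem _ (Submodule.add_mem _ ?_ ?_) ?_
  · exact Submodule.subset_span ⟨{v}, {v}, ∅, by simpa using hv⟩
  · exact Submodule.subset_span ⟨∅, {v}, {v}, by simpa using hv⟩
  · exact Submodule.subset_span ⟨{v}, ∅, {v}, by simpa using hv⟩

lemma sfT_mem {α : Type*} [DecidableEq α] (G : Finset α) {k : ℕ} (c : α → Fin k) 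
    (s : Finset (Fin k)) : ∏ j ∈ s, sfP G c j ∈ sfM G (2 * s.card) := by
  induction s using Finset.induction_on with
  | empty => 
    refine Submodule.subset_span ⟨∅, ∅, ∅, ?_⟩
    simp [sfI_empty]
    rfl
  | insert a s ha ih =>
    rw [prod_insert ha, card_insert_of_notMem ha, mul_add, add_comm]
    exact sfM_mul G (sfP_mem G c a) ih

/-- index set -/
def sfJ {α : Type*} [DecidableEq α] (G : Finset α) (k : ℕ) : Finset (Finset α) :=
  G.powerset.filter (fun S => 3 * S.card ≤ 2 * k)

lemma sf_decomp {α : Type*} [DecidableEq α] (G : Finset α) (k : ℕ) 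
    {p : Finset α → Finset α → Finset α → ℚ} (hp : p ∈ sfM G (2 * k)) :
    ∃ g1 g2 g3 : sfJ G k → Finset α → Finset α → ℚ, ∀ x y z, p x y z = 
      ∑ i, sfI i.1 x * g1 i y z + ∑ i, sfI i.1 y * g2 i x z + ∑ i, sfI i.1 z * g3 i x y := by
  unfold sfM at hp
  induction hp using Submodule.span_induction with
  | zero => exact ⟨0, 0, 0, by simp⟩
  | add a b _ _ ha hb => 
    obtain ⟨g1, g2, g3, h⟩ := ha
    obtain ⟨g1', g2', g3', h'⟩ := hb
    refine ⟨g1 + g1', g2 + g2', g3 + g3', fun x y z => ?_⟩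
    simp only [Pi.add_apply, h, h', mul_add, sum_add_distrib]
    ring
  | smul c a _ ha => 
    obtain ⟨g1, g2, g3, h⟩ := ha
    refine ⟨c • g1, c • g2, c • g3, fun x y z => ?_⟩
    simp only [Pi.smul_apply, h, smul_eq_mul, mul_add, mul_sum]
    simp only [mul_left_comm]
  | mem p hp =>
    obtain ⟨A, B, C, hA, hB, hC, hd, rfl⟩ := hp
    by_cases h1 : 3 * A.card ≤ 2 * k
    · refine ⟨fun i y z => if i = ⟨A, by simp [sfJ, hA, h1]⟩ then sfI B y * sfI C z else 0, 0, 0, ?_⟩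
      intro x y z
      simp [mul_assoc]
    by_cases h2 : 3 * B.card ≤ 2 * k
    · refine ⟨0, fun i x z => if i = ⟨B, by simp [sfJ, hB, h2]⟩ then sfI A x * sfI C z else 0, 0, ?_⟩
      intro x y z
      simp
      ring
    have h3 : 3 * C.card ≤ 2 * k := by omega
    · refine ⟨0, 0, fun i x y => if i = ⟨C, by simp [sfJ, hC, h3]⟩ then sfI A x * sfI B y else 0, ?_⟩
      intro x y z
      simp
      ring

lemma sfP_zero {α : Type*} [DecidableEq α] (G : Finset α) {k : ℕ} (c : α → Fin k)
    (x y z : Finset α) (hx : Set.InjOn c x) (hy : Set.InjOn c y) 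
    (v : α) (hv : v ∈ G) (hvx : v ∈ x) (hvy : v ∈ y) (hvz : v ∉ z) :
    sfP G c (c v) x y z = 0 := by
  unfold sfP
  rw [sum_eq_single v]
  · simp [sfI, hvx, hvy, hvz]
  · intro w hw hne
    have hw := (mem_filter.1 hw).2
    have h1 : w ∉ x := fun h => hne (hx h hvx hw)
    have h2 : w ∉ y := fun h => hne (hy h hvy hw)
    simp [sfI, h1, h2]
  · simp [hv]

lemma sfP_diag {α : Type*} [DecidableEq α] (G : Finset α) {k : ℕ} (c : α → Fin k) (j : Fin k)
    (x : Finset α) (hxG : x ⊆ G) (hx : Set.InjOn c x) (hk : x.card = k) : sfP G c j x x x ≠ 0 := by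
  have : x.image c = univ := by
    rw [← card_eq_iff_eq_univ, card_image_of_injOn hx, hk, Fintype.card_fin]
  have hj : j ∈ x.image c := by rw [this]; simp
  obtain ⟨v, hv, rfl⟩ := mem_image.1 hj
  unfold sfP
  rw [sum_eq_single v]
  · simp [sfI, hv]
  · intro w hw hne
    have hw := (mem_filter.1 hw).2
    have h1 : w ∉ x := fun h => hne (hx h hv hw)
    simp [sfI, h1]
  · simp [hxG hv]

lemma sfP_swap1 {α : Type*} [DecidableEq α] (G : Finset α) {k : ℕ} (c : α → Fin k) (j : Fin k)
    (x y z : Finset α) : sfP G c j x y z = sfP G c j y z x := by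
  unfold sfP
  congr 1
  exact sum_congr rfl fun _ _ => by ring

lemma sf_rainbow {α : Type*} [DecidableEq α] (G : Finset α) {k : ℕ} (c : α → Fin k)
    (F : Finset (Finset α)) (hG : ∀ A ∈ F, A ⊆ G) (hk : ∀ A ∈ F, A.card = k)
    (hc : ∀ A ∈ F, Set.InjOn c A) (hsf : SunflowerFree F) : F.card ≤ 3 * (sfJ G k).card := by
  have hm := sfT_mem G c univ
  rw [card_univ, Fintype.card_fin] at hm
  obtain ⟨g1, g2, g3, h⟩ := sf_decomp G k hm
  have := sf_slice (X := F) (I := sfJ G k) 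
    (fun x y z => (∏ j, sfP G c j) x.1 y.1 z.1) (fun i x => sfI i.1 x.1)
    (fun i y z => g1 i y z) (fun i y z => g2 i y z) (fun i y z => g3 i y z)
    (fun x y z => h x.1 y.1 z.1) ?_ ?_
  · simpa using this
  · rintro ⟨x, hx⟩ ⟨y, hy⟩ ⟨z, hz⟩ hne
    simp only [Subtype.mk.injEq] at hne
    simp only [Finset.prod_apply]
    rw [prod_eq_zero_iff]
    have key : ∃ v, (v ∈ x ∧ v ∈ y ∧ v ∉ z) ∨ (v ∈ y ∧ v ∈ z ∧ v ∉ x) ∨ (v ∈ z ∧ v ∈ x ∧ v ∉ y) := by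
      have hsub : ∀ a ∈ F, ∀ b ∈ F, a ≠ b → ∃ v, v ∈ a ∧ v ∉ b := by
        intro a ha b hb hab
        by_contra hcon
        push Not at hcon
        exact hab (eq_of_subset_of_card_le hcon (by rw [hk a ha, hk b hb]))
      by_cases hxy : x = y
      · subst hxy
        obtain ⟨v, h1, h2⟩ := hsub x hx z hz (by tauto)
        exact ⟨v, by tauto⟩
      by_cases hyz : y = z
      · subst hyz
        obtain ⟨v, h1, h2⟩ := hsub y hy x hx (by tauto)
        exact ⟨v, by tauto⟩
      by_cases hxz : x = z
      · subst hxz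
        obtain ⟨v, h1, h2⟩ := hsub x hx y hy (by tauto)
        exact ⟨v, by tauto⟩
      by_contra hcon
      push Not at hcon
      apply hsf
      refine ⟨x, hx, y, hy, z, hz, hxy, hxz, hyz, ?_, ?_, ?_⟩ <;>
      · ext v
        have := hcon v
        simp only [mem_inter]
        tauto
    obtain ⟨v, ⟨h1, h2, h3⟩ | ⟨h1, h2, h3⟩ | ⟨h1, h2, h3⟩⟩ := key
    · exact ⟨c v, mem_univ _, sfP_zero G c x y z (hc x hx) (hc y hy) v (hG x hx h1) h1 h2 h3⟩
    · refine ⟨c v, mem_univ _, ?_⟩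
      rw [sfP_swap1]
      exact sfP_zero G c y z x (hc y hy) (hc z hz) v (hG y hy h1) h1 h2 h3
    · refine ⟨c v, mem_univ _, ?_⟩
      rw [sfP_swap1, sfP_swap1]
      exact sfP_zero G c z x y (hc z hz) (hc x hx) v (hG z hz h1) h1 h2 h3
  · rintro ⟨x, hx⟩
    simp only [Finset.prod_apply]
    exact prod_ne_zero_iff.2 fun j _ => sfP_diag G c j x (hG x hx) (hc x hx) (hk x hx)

lemma sf_count {β : Type*} [Fintype β] [DecidableEq β] {k : ℕ} (A : Finset β) (hA : A.card = k) :
    k.factorial * k ^ Fintype.card β ≤ 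
      k ^ k * Fintype.card {c : β → Fin k // Set.InjOn c A} := by
  classical
  have e : Fintype.card ((A ↪ Fin k) × ({x // ¬ x ∈ A} → Fin k)) ≤ 
      Fintype.card {c : β → Fin k // Set.InjOn c A} := by
    let φ := Equiv.piEquivPiSubtypeProd (fun x => x ∈ A) (fun _ : β => Fin k)
    have hφ : ∀ q (x : β) (hx : x ∈ A), φ.symm q x = q.1 ⟨x, hx⟩ := by
      intro q x hx
      simp [φ, hx]
    refine Fintype.card_le_of_injective (fun q => ⟨φ.symm (⇑q.1, q.2), ?_⟩) ?_
    · intro x hx y hy hxy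
      have hx' : x ∈ A := hx
      have hy' : y ∈ A := hy
      rw [hφ _ x hx', hφ _ y hy'] at hxy
      simpa using q.1.injective hxy
    · intro q q' hqq
      have := φ.symm.injective (Subtype.mk.inj hqq)
      rw [Prod.mk.injEq] at this
      exact Prod.ext (DFunLike.coe_injective this.1) this.2
  have h2 : Fintype.card ((A ↪ Fin k) × ({x // ¬ x ∈ A} → Fin k)) = 
      k.factorial * k ^ (Fintype.card β - k) := by
    rw [Fintype.card_prod, Fintype.card_embedding_eq, Fintype.card_fun, Fintype.card_subtype_compl]
    simp [hA, Nat.descFactorial_self]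
  rw [h2] at e
  have hle : k ≤ Fintype.card β := hA ▸ card_le_univ A
  calc _ = k ^ k * (k.factorial * k ^ (Fintype.card β - k)) := by
        conv_lhs => rw [← Nat.add_sub_cancel' hle, pow_add]
        ring
    _ ≤ _ := Nat.mul_le_mul_left _ e

lemma sf_average {α : Type*} [DecidableEq α] (G : Finset α) {k : ℕ} (hk1 : 1 ≤ k)
    (F : Finset (Finset α)) (hG : ∀ A ∈ F, A ⊆ G) (hk : ∀ A ∈ F, A.card = k) :
    ∃ (c : α → Fin k) (F' : Finset (Finset α)), F' ⊆ F ∧ (∀ A ∈ F', Set.InjOn c A) ∧ 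
      k.factorial * F.card ≤ k ^ k * F'.card := by
  classical
  let ext : (G → Fin k) → α → Fin k := fun c v => if h : v ∈ G then c ⟨v, h⟩ else ⟨0, hk1⟩
  by_contra hcon
  push Not at hcon
  have h1 : ∀ c : G → Fin k, k ^ k * (F.filter (fun A : Finset α => Set.InjOn (ext c) A)).card < 
      k.factorial * F.card := fun c => 
    hcon (ext c) _ (filter_subset _ _) (fun A hA => (mem_filter.1 hA).2)
  have : Nonempty (G → Fin k) := ⟨fun _ => ⟨0, hk1⟩⟩
  have h2 := sum_lt_sum_of_nonempty (s := (univ : Finset (G → Fin k))) univ_nonempty (fun c _ => h1 c)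
  rw [← mul_sum] at h2
  simp only [card_filter] at h2
  rw [sum_comm] at h2
  simp only [← card_filter] at h2
  have h3 : ∀ A ∈ F, k.factorial * k ^ G.card ≤ 
      k ^ k * (univ.filter (fun c : G → Fin k => Set.InjOn (ext c) A)).card := by
    intro A hA
    let B : Finset G := A.subtype (fun v => v ∈ G)
    have hB : B.card = k := by
      rw [card_subtype, filter_true_of_mem (fun v hv => hG A hA hv), hk A hA]
    have := sf_count B hB
    rw [Fintype.card_coe] at this
    refine this.trans (Nat.mul_le_mul_left _ ?_)
    rw [Fintype.card_subtype]
    refine card_le_card ?_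
    intro c hc
    simp only [mem_filter, mem_univ, true_and] at hc ⊢
    intro x hx y hy hxy
    have hx' := hG A hA hx
    have hy' := hG A hA hy
    simp only [ext, hx', hy', dif_pos] at hxy
    have := hc (x₁ := ⟨x, hx'⟩) (by simpa [B] using hx) (x₂ := ⟨y, hy'⟩) (by simpa [B] using hy) hxy
    simpa using this
  have h4 := sum_le_sum h3
  rw [← mul_sum _ _ (k ^ k)] at h4
  simp only [sum_const, smul_eq_mul, card_univ, Fintype.card_fun, Fintype.card_fin, 
    Fintype.card_coe] at h2 h4
  have : F.card * (k.factorial * k ^ G.card) = k ^ G.card * (k.factorial * F.card) := by ring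
  omega

lemma sfJ_card {α : Type*} [DecidableEq α] (G : Finset α) (k : ℕ) (t : ℝ) (ht : 0 < t) (ht1 : t ≤ 1) :
    ((sfJ G k).card : ℝ) * t ^ ((2 * k : ℝ) / 3) ≤ Real.exp (t * G.card) := by
  calc ((sfJ G k).card : ℝ) * t ^ ((2 * k : ℝ) / 3) = ∑ S ∈ sfJ G k, t ^ ((2 * k : ℝ) / 3) := by simp
    _ ≤ ∑ S ∈ sfJ G k, t ^ S.card := by
      refine sum_le_sum fun S hS => ?_
      rw [← Real.rpow_natCast]
      apply Real.rpow_le_rpow_of_exponent_ge ht ht1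
      have : 3 * S.card ≤ 2 * k := (mem_filter.1 hS).2
      have : (3 * S.card : ℝ) ≤ 2 * k := by exact_mod_cast this
      linarith
    _ ≤ ∑ S ∈ G.powerset, t ^ S.card := 
      sum_le_sum_of_subset_of_nonneg (filter_subset _ _) (fun _ _ _ => by positivity)
    _ = (t + 1) ^ G.card := by
      rw [← Finset.sum_pow_mul_eq_add_pow]; simp
    _ ≤ (Real.exp t) ^ G.card := by
      gcongr
      exact Real.add_one_le_exp t
    _ = _ := by rw [← Real.exp_nat_mul, mul_comm]

theorem sunflowerFree_uniform_small_ground_bound {α : Type*} [DecidableEq α]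
    (k : ℕ) (hk : 1 ≤ k) (ε : ℝ) (hε : 0 < ε)
    (F : Finset (Finset α)) (huniform : ∀ A ∈ F, A.card = k)
    (hsf : SunflowerFree F)
    (hground : ((F.sup id).card : ℝ) ≤ (k : ℝ) ^ ((2.5 : ℝ) - ε)) :
    (F.card : ℝ) ≤ 3 * ((⌈(2 * k : ℚ) / 3⌉₊ : ℝ) + 1) *
      (2 ^ ((1 : ℝ) / 3) * 3 * Real.exp 1) ^ k *
      (k : ℝ) ^ ⌈(k : ℝ) * (1 - 2 * ε / 3)⌉₊ := by
  rcases F.eq_empty_or_nonempty with rfl | ⟨A0, hA0⟩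
  · simp only [card_empty, Nat.cast_zero]
    positivity
  set G := F.sup id with hGdef
  have hG : ∀ A ∈ F, A ⊆ G := fun A hA => le_sup (f := id) hA
  have hkR : (1 : ℝ) ≤ k := by exact_mod_cast hk
  have hk0 : (0 : ℝ) < k := by linarith
  have hkn : (k : ℝ) ≤ (k : ℝ) ^ ((2.5 : ℝ) - ε) := by
    refine le_trans ?_ hground
    have := card_le_card (hG A0 hA0)
    rw [huniform A0 hA0] at this
    exact_mod_cast this
  obtain ⟨c, F', hF', hc, hcard⟩ := sf_average G hk F hG huniform
  have hr := sf_rainbow G c F' (fun A hA => hG A (hF' hA)) (fun A hA => huniform A (hF' hA)) hc (by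
    rintro ⟨a, ha, b, hb, d, hd, h⟩
    exact hsf ⟨a, hF' ha, b, hF' hb, d, hF' hd, h⟩)
  set t : ℝ := (k : ℝ) ^ (ε - 1.5) with ht
  have ht0 : 0 < t := by positivity
  have htk : t * (k : ℝ) ^ ((2.5 : ℝ) - ε) = k := by
    rw [ht, ← Real.rpow_add hk0]
    norm_num
  have ht1 : t ≤ 1 := by
    by_contra hh
    push Not at hh
    nlinarith
  have hJ := sfJ_card G k t ht0 ht1
  have htG : t * G.card ≤ k :=
    (mul_le_mul_of_nonneg_left hground ht0.le).trans htk.le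
  have hJ2 : ((sfJ G k).card : ℝ) ≤ Real.exp k * (k : ℝ) ^ ((k : ℝ) * (1 - 2 * ε / 3)) := by
    have h1 : t ^ ((2 * k : ℝ) / 3) * (k : ℝ) ^ ((k : ℝ) * (1 - 2 * ε / 3)) = 1 := by
      rw [ht, ← Real.rpow_mul hk0.le, ← Real.rpow_add hk0]
      rw [show (ε - 1.5) * ((2 * k : ℝ) / 3) + (k : ℝ) * (1 - 2 * ε / 3) = 0 by ring]
      simp
    calc ((sfJ G k).card : ℝ) = (((sfJ G k).card : ℝ) * t ^ ((2 * k : ℝ) / 3)) * 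
          (k : ℝ) ^ ((k : ℝ) * (1 - 2 * ε / 3)) := by rw [mul_assoc, h1, mul_one]
      _ ≤ _ := by
        gcongr
        exact hJ.trans (Real.exp_le_exp.2 htG)
  have hfac : (k : ℝ) ^ k ≤ Real.exp k * k.factorial := by
    have := Real.pow_div_factorial_le_exp (k : ℝ) hk0.le k
    rwa [div_le_iff₀ (by positivity)] at this
  have hpow : (k : ℝ) ^ ((k : ℝ) * (1 - 2 * ε / 3)) ≤ (k : ℝ) ^ ⌈(k : ℝ) * (1 - 2 * ε / 3)⌉₊ := by
    rw [← Real.rpow_natCast]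
    exact Real.rpow_le_rpow_of_exponent_le hkR (Nat.le_ceil _)
  have h1 : (k.factorial : ℝ) * F.card ≤ (k : ℝ) ^ k * (3 * (sfJ G k).card) := by
    have := hcard.trans (Nat.mul_le_mul_left _ hr)
    exact_mod_cast this
  have h2 : (F.card : ℝ) ≤ Real.exp k * (3 * (sfJ G k).card) := by
    have hf : (0 : ℝ) < k.factorial := by positivity
    refine le_of_mul_le_mul_left (h1.trans ?_) hf
    calc (k : ℝ) ^ k * (3 * (sfJ G k).card) ≤ (Real.exp k * k.factorial) * (3 * (sfJ G k).card) := by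
          gcongr
      _ = _ := by ring
  have hexp : Real.exp k = Real.exp 1 ^ k := by rw [← Real.exp_nat_mul, mul_one]
  have h3 : Real.exp 1 ≤ 2 ^ ((1 : ℝ) / 3) * 3 := by
    have h4 : (1 : ℝ) ≤ 2 ^ ((1 : ℝ) / 3) := Real.one_le_rpow (by norm_num) (by norm_num)
    have := Real.exp_one_lt_d9
    linarith
  calc (F.card : ℝ) ≤ Real.exp k * (3 * (Real.exp k * (k : ℝ) ^ ⌈(k : ℝ) * (1 - 2 * ε / 3)⌉₊)) := by
        refine h2.trans ?_
        gcongr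
        refine hJ2.trans ?_
        gcongr
    _ = 3 * 1 * (Real.exp 1 * Real.exp 1) ^ k * (k : ℝ) ^ ⌈(k : ℝ) * (1 - 2 * ε / 3)⌉₊ := by
        rw [hexp, mul_pow]; ring
    _ ≤ _ := by
        gcongr
        linarith [Nat.cast_nonneg (α := ℝ) ⌈(2 * k : ℚ) / 3⌉₊]
end

section
/- Let α > 1 be a fixed real number. There exists a constant K(α) > 0 such that for all integers D > 2 and n ≥ 16, every sunflower-free family F ⊆ (ℤ_D)^n satisfies |F| ≤ K(α)·n!·((log log log n)^2/(α·log log n))^n. -/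
/-- Exactly two of `a`, `b`, `c` are equal. -/
def ExactlyTwoEq {β : Type*} (a b c : β) : Prop :=
  (a = b ∧ a ≠ c) ∨ (a = c ∧ a ≠ b) ∨ (b = c ∧ a ≠ b)

/-- A family `F ⊆ (ℤ_D)^n` is sunflower-free if for every three distinct members
there is a coordinate where exactly two of the three entries agree. -/
def SunflowerFreeZMod (D n : ℕ) (F : Finset (Fin n → ZMod D)) : Prop :=
  ∀ x ∈ F, ∀ y ∈ F, ∀ z ∈ F, x ≠ y → y ≠ z → x ≠ z →
    ∃ i : Fin n, ExactlyTwoEq (x i) (y i) (z i)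

open Finset in
lemma sf_frag {V I : Type*} [DecidableEq V] [Fintype I] (X : I → Finset V) (W : Finset V) (i : I) :
    ∃ T : Finset V, T ⊆ X i ∧ (∃ j, X j ⊆ W ∪ T) ∧ ∀ j, X j ⊆ W ∪ T → T ⊆ X j := by
  classical
  obtain ⟨j, hj, hmin⟩ := Finset.exists_min_image
    (univ.filter fun j => X j ⊆ W ∪ X i) (fun j => (X j \ W).card)
    ⟨i, by simp⟩
  simp only [mem_filter, mem_univ, true_and] at hj hmin
  refine ⟨X j \ W, ?_, ⟨j, ?_⟩, ?_⟩
  · intro v hv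
    have := hj (mem_sdiff.1 hv).1
    simp at this hv
    tauto
  · intro v hv
    simp; tauto
  · intro k hk
    have h1 : X k \ W ⊆ X j \ W := by
      intro v hv
      have := hk (mem_sdiff.1 hv).1
      simp at this hv ⊢
      tauto
    have h2 : X k ⊆ W ∪ X i := by
      intro v hv
      have := hk hv
      rcases mem_union.1 this with h | h
      · exact mem_union_left _ h
      · exact hj (mem_sdiff.1 h).1
    have h3 := Finset.eq_of_subset_of_card_le h1 (hmin k h2)
    rw [← h3]
    exact sdiff_subset

open Finset in
lemma sf_round1 {V I : Type*} [DecidableEq V] [Fintype V] [Fintype I] [DecidableEq I] [Nonempty I]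
    (X : I → Finset V) (n t : ℕ) (r : ℝ) (hr : 6 ≤ r) (hX : ∀ i, (X i).card ≤ n)
    (hs : ∀ Y : Finset V, ((univ.filter fun i => Y ⊆ X i).card : ℝ) * r ^ Y.card ≤ Fintype.card I) :
    ∃ T : (V → Fin 6) → I → Finset V, (∀ c i, T c i ⊆ X i) ∧
      (∀ c i, ∃ j, ∀ v ∈ X j, c v = 0 ∨ v ∈ T c i) ∧
      ((univ.filter fun p : (V → Fin 6) × I => t ≤ (T p.1 p.2).card).card : ℝ) ≤
        6 ^ Fintype.card V * (2 ^ n * (Fintype.card I * (6 / r) ^ t)) := by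
  classical
  choose T hT1 hT2 hT3 using fun (c : V → Fin 6) (i : I) => sf_frag X (univ.filter fun v => c v = 0) i
  refine ⟨T, hT1, ?_, ?_⟩
  · intro c i
    obtain ⟨j, hj⟩ := hT2 c i
    refine ⟨j, fun v hv => ?_⟩
    have := hj hv
    simpa using this
  have hJ : ∀ c : V → Fin 6, ∃ j, (∃ k, X k ⊆ univ.filter fun v => c v = 0) →
      X j ⊆ univ.filter fun v => c v = 0 := by
    intro c
    by_cases h : ∃ k, X k ⊆ univ.filter fun v => c v = 0
    · obtain ⟨k, hk⟩ := h
      exact ⟨k, fun _ => hk⟩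
    · exact ⟨Classical.arbitrary I, fun h' => absurd h' h⟩
  choose J hJ using hJ
  let box : (V → Fin 6) → Finset V → Finset (V → Fin 6) := fun c Y =>
    Fintype.piFinset fun v => if v ∈ Y then univ else {c v}
  have hbox : ∀ c Y, (box c Y).card = 6 ^ Y.card := by
    intro c Y
    simp only [box, Fintype.card_piFinset]
    rw [← Finset.prod_subset (Finset.subset_univ Y)]
    · rw [Finset.prod_congr rfl (g := fun _ => 6)]
      · simp
      · intro v hv; simp [hv]
    · intro v _ hv; simp [hv]
  have hsub : (univ.filter fun p : (V → Fin 6) × I => t ≤ (T p.1 p.2).card) ⊆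
      univ.biUnion fun c' : V → Fin 6 => ((X (J c')).powerset.filter fun Y => t ≤ Y.card).biUnion
        fun Y => (box c' Y) ×ˢ (univ.filter fun i => Y ⊆ X i) := by
    rintro ⟨c, i⟩ h
    simp only [mem_filter, mem_univ, true_and] at h
    simp only [mem_biUnion, mem_univ, true_and, mem_filter, mem_powerset, mem_product]
    let c' : V → Fin 6 := fun v => if v ∈ T c i then 0 else c v
    have hW : (univ.filter fun v => c' v = 0) = (univ.filter fun v => c v = 0) ∪ T c i := by
      ext v
      by_cases hv : v ∈ T c i <;> simp [c', hv]
    refine ⟨c', T c i, ⟨?_, h⟩, ?_, hT1 c i⟩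
    · apply hT3
      rw [← hW]
      apply hJ
      rw [hW]
      exact hT2 c i
    · simp only [box, Fintype.mem_piFinset]
      intro v
      by_cases hv : v ∈ T c i <;> simp [c', hv]
  have hr0 : 0 < r := by linarith
  have hq : 6 / r ≤ 1 := by rw [div_le_one hr0]; exact hr
  have hq0 : 0 ≤ 6 / r := by positivity
  calc ((univ.filter fun p : (V → Fin 6) × I => t ≤ (T p.1 p.2).card).card : ℝ)
      ≤ ((∑ c' : V → Fin 6, ∑ Y ∈ (X (J c')).powerset.filter fun Y => t ≤ Y.card,
          ((box c' Y) ×ˢ (univ.filter fun i => Y ⊆ X i)).card : ℕ) : ℝ) := by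
        exact_mod_cast (card_le_card hsub).trans (card_biUnion_le.trans
          (Finset.sum_le_sum fun c' _ => card_biUnion_le))
    _ = ∑ c' : V → Fin 6, ∑ Y ∈ (X (J c')).powerset.filter fun Y => t ≤ Y.card,
          (6 : ℝ) ^ Y.card * ((univ.filter fun i => Y ⊆ X i).card : ℝ) := by
        push_cast [card_product, hbox]; rfl
    _ ≤ ∑ c' : V → Fin 6, ∑ Y ∈ (X (J c')).powerset.filter fun Y => t ≤ Y.card,
          (Fintype.card I * (6 / r) ^ t : ℝ) := by
        refine Finset.sum_le_sum fun c' _ => Finset.sum_le_sum fun Y hY => ?_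
        have hYt := (mem_filter.1 hY).2
        have h1 := hs Y
        have h2 : ((univ.filter fun i => Y ⊆ X i).card : ℝ) ≤ Fintype.card I / r ^ Y.card := by
          rw [le_div_iff₀ (by positivity)]; exact h1
        calc _ ≤ (6 : ℝ) ^ Y.card * (Fintype.card I / r ^ Y.card) := by gcongr
          _ = Fintype.card I * (6 / r) ^ Y.card := by rw [div_pow]; ring
          _ ≤ _ := by
            gcongr ?_ * ?_
            exact pow_le_pow_of_le_one hq0 hq hYt
    _ ≤ ∑ c' : V → Fin 6, (2 ^ n * (Fintype.card I * (6 / r) ^ t) : ℝ) := by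
        refine Finset.sum_le_sum fun c' _ => ?_
        rw [sum_const, nsmul_eq_mul]
        gcongr
        have : ((X (J c')).powerset.filter fun Y => t ≤ Y.card).card ≤ 2 ^ n := by
          refine (card_filter_le _ _).trans ?_
          rw [card_powerset]
          exact Nat.pow_le_pow_right (by norm_num) (hX _)
        exact_mod_cast this
    _ = _ := by
        rw [sum_const, nsmul_eq_mul]
        simp

open Finset in
lemma sf_round2 {V I : Type*} [DecidableEq V] [Fintype V] [Fintype I] [DecidableEq I]
    (X T : I → Finset V) (G : Finset I) (t : ℕ) (r : ℝ) (hr : 6 ≤ r)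
    (hT : ∀ i, T i ⊆ X i) (hG : ∀ i ∈ G, (T i).card ≤ t)
    (hs : ∀ Y : Finset V, ((univ.filter fun i => Y ⊆ X i).card : ℝ) * r ^ Y.card ≤ Fintype.card I) :
    (G.card : ℝ) * 6 ^ Fintype.card V ≤
      ((univ.filter fun d : V → Fin 6 => ∃ i ∈ G, ∀ v ∈ T i, d v = 0).card : ℝ) *
        (Fintype.card I * (1 + 6 / r) ^ t) := by
  classical
  have hr0 : 0 < r := by linarith
  rcases G.eq_empty_or_nonempty with rfl | hne
  · simp
  have hGpos : (0 : ℝ) < G.card := by exact_mod_cast hne.card_pos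
  set N := Fintype.card V
  have hcount : ∀ Y : Finset V,
      (∑ d : V → Fin 6, if ∀ v ∈ Y, d v = 0 then (1 : ℝ) else 0) * 6 ^ Y.card = 6 ^ N := by
    intro Y
    rw [← Finset.sum_filter, sum_const, nsmul_eq_mul, mul_one]
    have : (univ.filter fun d : V → Fin 6 => ∀ v ∈ Y, d v = 0) =
        Fintype.piFinset fun v => if v ∈ Y then ({0} : Finset (Fin 6)) else univ := by
      ext d
      simp only [mem_filter, mem_univ, true_and, Fintype.mem_piFinset]
      refine forall_congr' fun v => ?_
      by_cases hv : v ∈ Y <;> simp [hv]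
    rw [this, Fintype.card_piFinset]
    have h2 : ∏ v : V, (if v ∈ Y then ({0} : Finset (Fin 6)) else univ).card = 6 ^ Yᶜ.card := by
      rw [← Finset.prod_subset (Finset.subset_univ Yᶜ)]
      · rw [Finset.prod_congr rfl (g := fun _ => 6)]
        · simp
        · intro v hv; simp at hv; simp [hv]
      · intro v _ hv; simp at hv; simp [hv]
    rw [h2]
    push_cast
    rw [← pow_add, card_compl_add_card]
  let E : I → (V → Fin 6) → ℝ := fun i d => if ∀ v ∈ T i, d v = 0 then 6 ^ (T i).card else 0
  let P := univ.filter fun d : V → Fin 6 => ∃ i ∈ G, ∀ v ∈ T i, d v = 0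
  have hE1 : ∀ i, ∑ d, E i d = 6 ^ N := by
    intro i
    rw [← hcount (T i), Finset.sum_mul]
    refine Finset.sum_congr rfl fun d _ => ?_
    simp only [E]; split_ifs <;> simp
  have hE2 : ∀ i j, ∑ d, E i d * E j d = 6 ^ N * 6 ^ (T i ∩ T j).card := by
    intro i j
    rw [← hcount (T i ∪ T j), mul_assoc, ← pow_add, card_union_add_card_inter, pow_add,
      Finset.sum_mul]
    refine Finset.sum_congr rfl fun d _ => ?_
    have : (∀ v ∈ T i ∪ T j, d v = 0) ↔ (∀ v ∈ T i, d v = 0) ∧ (∀ v ∈ T j, d v = 0) := by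
      simp only [mem_union]
      constructor
      · intro h; exact ⟨fun v hv => h v (Or.inl hv), fun v hv => h v (Or.inr hv)⟩
      · rintro ⟨h1, h2⟩ v (hv | hv)
        · exact h1 v hv
        · exact h2 v hv
    simp only [E, this]
    by_cases h1 : ∀ v ∈ T i, d v = 0
    · by_cases h2 : ∀ v ∈ T j, d v = 0
      · rw [if_pos h1, if_pos h2, if_pos ⟨h1, h2⟩, one_mul]
      · rw [if_neg h2, if_neg (c := (_ ∧ _)) (fun h => h2 h.2), mul_zero, zero_mul]
    · rw [if_neg h1, if_neg (c := (_ ∧ _)) (fun h => h1 h.1), zero_mul, zero_mul]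
  have hpow : ∀ S : Finset V, (6 : ℝ) ^ S.card = ∑ Y ∈ S.powerset, 5 ^ Y.card := by
    intro S
    have := Finset.sum_pow_mul_eq_add_pow (5 : ℝ) 1 S
    simp only [one_pow, mul_one] at this
    rw [this]; norm_num
  have hsum : ∀ i ∈ G, ∑ j ∈ G, (6 : ℝ) ^ (T i ∩ T j).card ≤
      Fintype.card I * (1 + 6 / r) ^ t := by
    intro i hi
    calc ∑ j ∈ G, (6 : ℝ) ^ (T i ∩ T j).card
        ≤ ∑ j, (6 : ℝ) ^ (T i ∩ X j).card := by
          refine (Finset.sum_le_sum fun j _ => ?_).trans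
            (Finset.sum_le_sum_of_subset_of_nonneg (subset_univ G) fun _ _ _ => by positivity)
          exact pow_le_pow_right₀ (by norm_num) (card_le_card (inter_subset_inter_left (hT j)))
      _ = ∑ j, ∑ Y ∈ (T i).powerset, if Y ⊆ X j then (5 : ℝ) ^ Y.card else 0 := by
          refine Finset.sum_congr rfl fun j _ => ?_
          rw [hpow, ← Finset.sum_filter]
          refine Finset.sum_congr ?_ fun _ _ => rfl
          ext Y
          rw [mem_powerset, mem_filter, mem_powerset, subset_inter_iff]
      _ = ∑ Y ∈ (T i).powerset, (5 : ℝ) ^ Y.card * (univ.filter fun j => Y ⊆ X j).card := by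
          rw [Finset.sum_comm]
          refine Finset.sum_congr rfl fun Y _ => ?_
          rw [← Finset.sum_filter, sum_const, nsmul_eq_mul, mul_comm]
      _ ≤ ∑ Y ∈ (T i).powerset, Fintype.card I * (6 / r) ^ Y.card := by
          refine Finset.sum_le_sum fun Y _ => ?_
          have h2 : ((univ.filter fun i => Y ⊆ X i).card : ℝ) ≤ Fintype.card I / r ^ Y.card := by
            rw [le_div_iff₀ (by positivity)]; exact hs Y
          calc _ ≤ (6 : ℝ) ^ Y.card * (Fintype.card I / r ^ Y.card) := by
                gcongr; norm_num
            _ = Fintype.card I * (6 / r) ^ Y.card := by rw [div_pow]; ring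
      _ = Fintype.card I * (1 + 6 / r) ^ (T i).card := by
          rw [← Finset.mul_sum]
          have := Finset.sum_pow_mul_eq_add_pow (6 / r) 1 (T i)
          simp only [one_pow, mul_one] at this
          rw [this, add_comm]
      _ ≤ _ := by
          gcongr
          · have : 0 ≤ 6 / r := by positivity
            linarith
          · exact hG i hi
  have hCS := Finset.sum_mul_sq_le_sq_mul_sq univ
    (fun d : V → Fin 6 => if d ∈ P then (1 : ℝ) else 0) (fun d => ∑ i ∈ G, E i d)
  have hA : ∑ d : V → Fin 6, (if d ∈ P then (1 : ℝ) else 0) * ∑ i ∈ G, E i d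
      = G.card * 6 ^ N := by
    calc _ = ∑ d : V → Fin 6, ∑ i ∈ G, E i d := by
          refine Finset.sum_congr rfl fun d _ => ?_
          by_cases hd : d ∈ P
          · simp [hd]
          · simp only [hd, if_false, zero_mul]
            symm
            refine Finset.sum_eq_zero fun i hi => ?_
            simp only [E]
            rw [if_neg]
            intro h
            exact hd (by simp only [P, mem_filter, mem_univ, true_and]; exact ⟨i, hi, h⟩)
      _ = _ := by
          rw [Finset.sum_comm]
          simp [hE1]
  have hB : ∑ d : V → Fin 6, (if d ∈ P then (1 : ℝ) else 0) ^ 2 = P.card := by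
    simp
  have hC : ∑ d : V → Fin 6, (∑ i ∈ G, E i d) ^ 2 ≤
      G.card * 6 ^ N * (Fintype.card I * (1 + 6 / r) ^ t) := by
    calc _ = ∑ d : V → Fin 6, ∑ i ∈ G, ∑ j ∈ G, E i d * E j d := by
          refine Finset.sum_congr rfl fun d _ => ?_
          rw [sq, Finset.sum_mul_sum]
      _ = ∑ i ∈ G, ∑ j ∈ G, ∑ d, E i d * E j d := by
          rw [Finset.sum_comm]
          refine Finset.sum_congr rfl fun i _ => ?_
          rw [Finset.sum_comm]
      _ = ∑ i ∈ G, 6 ^ N * ∑ j ∈ G, (6 : ℝ) ^ (T i ∩ T j).card := by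
          simp only [hE2, Finset.mul_sum]
      _ ≤ ∑ i ∈ G, 6 ^ N * (Fintype.card I * (1 + 6 / r) ^ t) := by
          refine Finset.sum_le_sum fun i hi => ?_
          gcongr
          exact hsum i hi
      _ = _ := by rw [sum_const, nsmul_eq_mul]; ring
  rw [hA, hB] at hCS
  have h6 : (0 : ℝ) < G.card * 6 ^ N := by positivity
  have := hCS.trans (mul_le_mul_of_nonneg_left hC (by positivity : (0 : ℝ) ≤ P.card))
  refine le_of_mul_le_mul_left ?_ h6
  calc _ = ((G.card : ℝ) * 6 ^ N) ^ 2 := by ring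
    _ ≤ _ := this
    _ = _ := by ring

def sfPerm (p : Fin 6 × Fin 6) : Fin 3 × Fin 12 :=
  if p.1 = 0 then (0, Fin.ofNat 12 p.2.val)
  else if p.2 = 0 then (0, Fin.ofNat 12 (5 + p.1.val))
  else if p.1 = 5 ∧ p.2 = 5 then (0, 11)
  else
    let k := (p.1.val - 1) * 5 + (p.2.val - 1)
    (Fin.ofNat 3 (1 + k / 12), Fin.ofNat 12 k)

set_option maxRecDepth 100000 in
lemma sfPerm_bij : Function.Bijective sfPerm := by
  rw [Fintype.bijective_iff_injective_and_card]
  refine ⟨?_, by simp⟩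
  unfold Function.Injective
  decide

set_option maxRecDepth 100000 in
lemma sfPerm_zero : ∀ p : Fin 6 × Fin 6, (p.1 = 0 ∨ p.2 = 0) → (sfPerm p).1 = 0 := by
  decide

open Finset in
lemma sf_core {V I : Type*} [DecidableEq V] [Fintype V] [Fintype I] [DecidableEq I] [Nonempty I]
    (X : I → Finset V) (n t : ℕ) (r : ℝ) (hr : 6 ≤ r) (hX : ∀ i, (X i).card ≤ n)
    (hs : ∀ Y : Finset V, ((univ.filter fun i => Y ⊆ X i).card : ℝ) * r ^ Y.card ≤ Fintype.card I)
    (h1 : 2 ^ n * (6 / r) ^ t ≤ 1 / 6) (h2 : 36 * (t : ℝ) ≤ r) :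
    ∃ j : Fin 3 → I, ∀ a b, a ≠ b → Disjoint (X (j a)) (X (j b)) := by
  classical
  have hr0 : 0 < r := by linarith
  obtain ⟨T, hT1, hT2, hbad⟩ := sf_round1 X n t r hr hX hs
  set N := Fintype.card V with hN
  have hI : (0 : ℝ) < Fintype.card I := by exact_mod_cast Fintype.card_pos
  have hbad' : ((univ.filter fun p : (V → Fin 6) × I => t ≤ (T p.1 p.2).card).card : ℝ) ≤
      6 ^ N * (Fintype.card I * (1 / 6)) := by
    refine hbad.trans ?_
    refine mul_le_mul_of_nonneg_left ?_ (by positivity)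
    calc _ = (Fintype.card I : ℝ) * (2 ^ n * (6 / r) ^ t) := by ring
      _ ≤ _ := by gcongr
  let G : (V → Fin 6) → Finset I := fun c => univ.filter fun i => ¬ t ≤ (T c i).card
  have hG : ∑ c, ((G c).card : ℝ) + ((univ.filter fun p : (V → Fin 6) × I =>
      t ≤ (T p.1 p.2).card).card : ℝ) = 6 ^ N * Fintype.card I := by
    have e1 : ((univ.filter fun p : (V → Fin 6) × I => t ≤ (T p.1 p.2).card).card : ℝ) =
        ∑ c, ((univ.filter fun i => t ≤ (T c i).card).card : ℝ) := by
      simp only [Finset.card_filter, Fintype.sum_prod_type]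
      push_cast
      rfl
    rw [e1, ← Finset.sum_add_distrib]
    have : ∀ c, ((G c).card : ℝ) + ((univ.filter fun i => t ≤ (T c i).card).card : ℝ)
        = Fintype.card I := by
      intro c
      have := Finset.card_filter_add_card_filter_not (s := (univ : Finset I))
        (fun i => t ≤ (T c i).card)
      rw [card_univ] at this
      rw [← this]; push_cast; ring
    simp only [this]
    rw [sum_const, nsmul_eq_mul]
    simp [hN]
  let P : (V → Fin 6) → Finset (V → Fin 6) := fun c =>
    univ.filter fun d : V → Fin 6 => ∃ i ∈ G c, ∀ v ∈ T c i, d v = 0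
  have hq : (1 + 6 / r) ^ t ≤ 6 / 5 := by
    have a1 : 1 + 6 / r ≤ Real.exp (6 / r) := by linarith [Real.add_one_le_exp (6 / r)]
    have a2 : (1 + 6 / r) ^ t ≤ Real.exp (t * (6 / r)) := by
      rw [Real.exp_nat_mul]
      exact pow_le_pow_left₀ (by positivity) a1 t
    have a3 : t * (6 / r) ≤ 1 / 6 := by
      rw [mul_div_assoc', div_le_iff₀ hr0]; linarith
    have a4 : Real.exp (1 / 6) ≤ 6 / 5 := by
      have b1 := Real.add_one_le_exp (-(1 / 6 : ℝ))
      have b2 : Real.exp (1 / 6) * Real.exp (-(1 / 6)) = 1 := by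
        rw [← Real.exp_add]; simp
      have b3 := Real.exp_pos (1 / 6)
      nlinarith
    exact a2.trans ((Real.exp_le_exp.2 a3).trans a4)
  have hP : ∀ c, ((G c).card : ℝ) * 6 ^ N ≤ (P c).card * (Fintype.card I * (6 / 5)) := by
    intro c
    refine (sf_round2 X (T c) (G c) t r hr (hT1 c) ?_ hs).trans ?_
    · intro i hi
      have := (mem_filter.1 hi).2
      omega
    · gcongr
  let R : Fin 3 → Finset (V → Fin 3 × Fin 12) := fun m =>
    univ.filter fun f => ∃ j, ∀ v ∈ X j, (f v).1 = m
  have hR0 : (∑ c, (P c).card) ≤ (R 0).card := by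
    have e : (univ.filter fun p : (V → Fin 6) × (V → Fin 6) => p.2 ∈ P p.1).card
        = ∑ c, (P c).card := by
      simp only [Finset.card_filter, Fintype.sum_prod_type]
      refine Finset.sum_congr rfl fun c _ => ?_
      rw [← Finset.card_filter]
      congr 1
      ext d; simp
    rw [← e]
    refine Finset.card_le_card_of_injOn (fun p v => sfPerm (p.1 v, p.2 v)) ?_ ?_
    · rintro ⟨c, d⟩ h
      simp only [coe_filter, mem_univ, true_and, Set.mem_ofPred_eq, P, mem_filter] at h
      obtain ⟨i, _, hi⟩ := h
      obtain ⟨j, hj⟩ := hT2 c i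
      simp only [R, coe_filter, mem_univ, true_and, Set.mem_ofPred_eq]
      refine ⟨j, fun v hv => sfPerm_zero _ ?_⟩
      rcases hj v hv with h | h
      · exact Or.inl h
      · exact Or.inr (hi v h)
    · rintro ⟨c, d⟩ _ ⟨c', d'⟩ _ h
      have : ∀ v, (c v, d v) = (c' v, d' v) := fun v => sfPerm_bij.1 (congrFun h v)
      simp only [Prod.mk.injEq] at this ⊢
      exact ⟨funext fun v => (this v).1, funext fun v => (this v).2⟩
  have hRm : ∀ m, (R 0).card ≤ (R m).card := by
    intro m
    refine Finset.card_le_card_of_injOn (fun f v => ((f v).1 + m, (f v).2)) ?_ ?_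
    · intro f h
      simp only [R, coe_filter, mem_univ, true_and, Set.mem_ofPred_eq] at h ⊢
      obtain ⟨j, hj⟩ := h
      exact ⟨j, fun v hv => by simp [hj v hv]⟩
    · intro f _ g _ h
      funext v
      have := congrFun h v
      simp only [Prod.mk.injEq, add_left_inj] at this
      exact Prod.ext this.1 this.2
  have hbig : ∀ m, (25 / 36 : ℝ) * 36 ^ N ≤ (R m).card := by
    intro m
    have s1 : (∑ c, ((G c).card : ℝ)) * 6 ^ N ≤
        (∑ c, ((P c).card : ℝ)) * (Fintype.card I * (6 / 5)) := by
      rw [Finset.sum_mul, Finset.sum_mul]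
      exact Finset.sum_le_sum fun c _ => hP c
    have s2 : (∑ c, ((P c).card : ℝ)) ≤ (R m).card := by
      exact_mod_cast hR0.trans (hRm m)
    have s3 : (5 / 6) * (6 ^ N * Fintype.card I) ≤ ∑ c, ((G c).card : ℝ) := by linarith
    have s4 : (36 : ℝ) ^ N = 6 ^ N * 6 ^ N := by rw [← mul_pow]; norm_num
    refine le_of_mul_le_mul_right ?_ (by positivity : (0 : ℝ) < Fintype.card I * (6 / 5))
    calc (25 / 36 : ℝ) * 36 ^ N * (Fintype.card I * (6 / 5))
        = (5 / 6) * (6 ^ N * Fintype.card I) * 6 ^ N := by rw [s4]; ring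
      _ ≤ (∑ c, ((G c).card : ℝ)) * 6 ^ N := by gcongr
      _ ≤ _ := s1
      _ ≤ _ := by gcongr
  have hex : ∃ f : V → Fin 3 × Fin 12, ∀ m, f ∈ R m := by
    by_contra! hcon
    have hcov : (univ : Finset (V → Fin 3 × Fin 12)) ⊆ univ.biUnion fun m => (R m)ᶜ := by
      intro f _
      obtain ⟨m, hm⟩ := hcon f
      simp only [mem_biUnion, mem_univ, true_and, mem_compl]
      exact ⟨m, hm⟩
    have hc := (card_le_card hcov).trans card_biUnion_le
    have hU : (univ : Finset (V → Fin 3 × Fin 12)).card = 36 ^ N := by simp [hN]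
    have hcm : ∀ m, (((R m)ᶜ.card : ℕ) : ℝ) + (R m).card = 36 ^ N := by
      intro m
      have := card_compl_add_card (R m)
      rw [← card_univ, hU] at this
      exact_mod_cast this
    rw [hU] at hc
    have hc' : (36 : ℝ) ^ N ≤ ∑ m, (((R m)ᶜ.card : ℕ) : ℝ) := by exact_mod_cast hc
    rw [Fin.sum_univ_three] at hc'
    have p : (0 : ℝ) < 36 ^ N := by positivity
    linarith [hcm 0, hcm 1, hcm 2, hbig 0, hbig 1, hbig 2]
  obtain ⟨f, hf⟩ := hex
  have : ∀ m, ∃ j, ∀ v ∈ X j, (f v).1 = m := by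
    intro m
    simpa [R] using hf m
  choose j hj using this
  refine ⟨j, fun a b hab => ?_⟩
  rw [Finset.disjoint_left]
  intro v ha hb
  exact hab ((hj a v ha).symm.trans (hj b v hb))

open Finset in
lemma sf_main (D n t : ℕ) [NeZero D] (r : ℝ) (hr : 6 ≤ r)
    (h1 : 2 ^ n * (6 / r) ^ t ≤ 1 / 6) (h2 : 36 * (t : ℝ) ≤ r)
    (F : Finset (Fin n → ZMod D)) (hF : SunflowerFreeZMod D n F) :
    (F.card : ℝ) ≤ r ^ n := by
  classical
  have hr0 : 0 < r := by linarith
  by_contra! hcon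
  let S : (Fin n → ZMod D) → Finset (Fin n × ZMod D) := fun x => univ.image fun i => (i, x i)
  have hS : ∀ x p, p ∈ S x ↔ x p.1 = p.2 := by
    intro x p
    simp only [S, mem_image, mem_univ, true_and]
    constructor
    · rintro ⟨i, rfl⟩; rfl
    · intro h; exact ⟨p.1, by rw [h]⟩
  have hScard : ∀ x, (S x).card = n := by
    intro x
    simp only [S]
    rw [card_image_of_injective]
    · simp
    · intro a b h; exact (Prod.mk.inj h).1
  let g : Finset (Fin n × ZMod D) → ℝ := fun Z => ((F.filter fun x => Z ⊆ S x).card : ℝ) * r ^ Z.card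
  obtain ⟨Z, -, hZ⟩ := Finset.exists_max_image (univ : Finset (Finset (Fin n × ZMod D))) g
    ⟨∅, mem_univ _⟩
  have hg0 : g ∅ = F.card := by simp [g]
  have hgZ : r ^ n < g Z := by
    have := hZ ∅ (mem_univ _)
    linarith
  let FZ := F.filter fun x => Z ⊆ S x
  have hne : FZ.Nonempty := by
    rw [nonempty_iff_ne_empty]
    intro h
    have : g Z = 0 := by simp only [g]; change ((FZ.card : ℝ)) * _ = 0; rw [h]; simp
    rw [this] at hgZ
    have : 0 < r ^ n := by positivity
    linarith
  have : Nonempty FZ := hne.to_subtype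
  have hnonempty : ∀ x ∈ FZ, (S x \ Z).Nonempty := by
    intro x hx
    by_contra hc
    rw [not_nonempty_iff_eq_empty, sdiff_eq_empty_iff_subset] at hc
    have hxZ : S x = Z := hc.antisymm (mem_filter.1 hx).2
    have hcard : FZ.card ≤ 1 := by
      rw [card_le_one]
      have key : ∀ y ∈ FZ, y = x := by
        intro y hy
        have hy2 := (mem_filter.1 hy).2
        funext i
        rw [← hxZ] at hy2
        have : (i, x i) ∈ S y := hy2 ((hS x _).2 rfl)
        exact (hS y _).1 this
      intro a ha b hb
      rw [key a ha, key b hb]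
    have : g Z ≤ 1 * r ^ n := by
      simp only [g]
      rw [← hxZ, hScard, hxZ]
      gcongr
      exact_mod_cast hcard
    linarith
  obtain ⟨j, hj⟩ := sf_core (I := FZ) (fun x => S x.1 \ Z) n t r hr
    (fun x => (card_le_card sdiff_subset).trans (hScard _).le) (by
      intro Y
      by_cases hd : Disjoint Y Z
      · have h := hZ (Z ∪ Y) (mem_univ _)
        simp only [g] at h
        rw [card_union_of_disjoint hd.symm, pow_add] at h
        have hle : (univ.filter fun x : FZ => Y ⊆ S x.1 \ Z).card ≤
            (F.filter fun x => Z ∪ Y ⊆ S x).card := by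
          refine Finset.card_le_card_of_injOn (fun x => x.1) ?_ ?_
          · intro x hx
            simp only [coe_filter, mem_univ, true_and, Set.mem_ofPred_eq] at hx ⊢
            have hx2 := mem_filter.1 x.2
            exact ⟨hx2.1, union_subset hx2.2 (hx.trans sdiff_subset)⟩
          · intro x _ y _ hxy
            exact Subtype.ext hxy
        have hle' : ((univ.filter fun x : FZ => Y ⊆ S x.1 \ Z).card : ℝ) ≤
            (F.filter fun x => Z ∪ Y ⊆ S x).card := by exact_mod_cast hle
        have hZp : 0 < r ^ Z.card := by positivity
        have hYp : 0 < r ^ Y.card := by positivity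
        rw [Fintype.card_coe]
        refine le_of_mul_le_mul_right ?_ hZp
        calc _ ≤ ((F.filter fun x => Z ∪ Y ⊆ S x).card : ℝ) * r ^ Y.card * r ^ Z.card := by gcongr
          _ = ((F.filter fun x => Z ∪ Y ⊆ S x).card : ℝ) * (r ^ Z.card * r ^ Y.card) := by ring
          _ ≤ _ := h
      · have : (univ.filter fun x : FZ => Y ⊆ S x.1 \ Z) = ∅ := by
          rw [filter_eq_empty_iff]
          intro x _ hx
          exact hd (disjoint_of_subset_left hx sdiff_disjoint)
        rw [this]; simp) h1 h2
  have hneq : ∀ a b, a ≠ b → (j a).1 ≠ (j b).1 := by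
    intro a b hab h
    have hd := hj a b hab
    obtain ⟨v, hv⟩ := hnonempty _ (j a).2
    rw [Finset.disjoint_left] at hd
    exact hd hv (by simpa [← h] using hv)
  have key : ∀ a b c, a ≠ b → ∀ i, (j a).1 i = (j b).1 i → (j a).1 i = (j c).1 i := by
    intro a b c hab i h
    have hd := hj a b hab
    rw [Finset.disjoint_left] at hd
    have hZi : (i, (j a).1 i) ∈ Z := by
      by_contra hz
      exact hd (a := (i, (j a).1 i)) (mem_sdiff.2 ⟨(hS _ _).2 rfl, hz⟩)
        (mem_sdiff.2 ⟨(hS _ _).2 h.symm, hz⟩)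
    exact ((hS _ _).1 ((mem_filter.1 (j c).2).2 hZi)).symm
  have hmem : ∀ a, (j a).1 ∈ F := fun a => (mem_filter.1 (j a).2).1
  obtain ⟨i, hi⟩ := hF _ (hmem 0) _ (hmem 1) _ (hmem 2) (hneq 0 1 (by decide))
    (hneq 1 2 (by decide)) (hneq 0 2 (by decide))
  rcases hi with ⟨h, h'⟩ | ⟨h, h'⟩ | ⟨h, h'⟩
  · exact h' (key 0 1 2 (by decide) i h)
  · exact h' (key 0 2 1 (by decide) i h)
  · exact h' (key 1 2 0 (by decide) i h).symm

lemma sf_large (α : ℝ) (hα : 1 < α) : ∃ N0 : ℕ, ∀ n : ℕ, N0 ≤ n →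
    1 ≤ Real.log (Real.log (Real.log n)) ∧ 0 < Real.log (Real.log n) ∧
    ∃ t : ℕ, 6 ≤ n / (Real.exp 1 * (α * Real.log (Real.log n))) ∧
      2 ^ n * (6 / (n / (Real.exp 1 * (α * Real.log (Real.log n))))) ^ t ≤ (1 / 6 : ℝ) ∧
      36 * (t : ℝ) ≤ n / (Real.exp 1 * (α * Real.log (Real.log n))) := by
  have hlog : Filter.Tendsto (fun n : ℕ => Real.log n) Filter.atTop Filter.atTop :=
    Real.tendsto_log_atTop.comp tendsto_natCast_atTop_atTop
  have hl2 := Real.tendsto_log_atTop.comp hlog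
  have hl3 := Real.tendsto_log_atTop.comp hl2
  have he : (0 : ℝ) < Real.exp 1 * α := by positivity
  have hc : 0 < (288 * (Real.exp 1 * α))⁻¹ := by positivity
  have hlit := hlog.eventually (Real.isLittleO_log_id_atTop.def hc)
  have hev := ((((hl3.eventually_ge_atTop 1).and (hl2.eventually_ge_atTop 1)).and
    (hlog.eventually_ge_atTop 1)).and hlit).and (Filter.eventually_ge_atTop 144)
  obtain ⟨N0, hN0⟩ := Filter.eventually_atTop.1 hev
  refine ⟨N0, fun n hn => ?_⟩
  obtain ⟨⟨⟨⟨h3, h2⟩, h1⟩, hli⟩, hn144⟩ := hN0 n hn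
  simp only [Function.comp] at h3 h2
  set L1 := Real.log n with hL1
  set L2 := Real.log L1 with hL2
  have hn' : (144 : ℝ) ≤ n := by exact_mod_cast hn144
  have hL2pos : 0 < L2 := by linarith
  have hdom : 288 * (Real.exp 1 * (α * L2)) ≤ L1 := by
    simp only [id, Real.norm_eq_abs] at hli
    rw [abs_of_pos hL2pos, abs_of_pos (by linarith), inv_mul_eq_div, le_div_iff₀ (by positivity)] at hli
    linarith
  have hsq : Real.sqrt n * Real.sqrt n = n := Real.mul_self_sqrt (by positivity)
  have hsq12 : 12 ≤ Real.sqrt n := Real.le_sqrt_of_sq_le (by linarith)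
  have hlogsq : Real.log (Real.sqrt n) = L1 / 2 := Real.log_sqrt (by positivity)
  have hL1le : L1 ≤ 2 * Real.sqrt n := by
    have := Real.log_le_sub_one_of_pos (show 0 < Real.sqrt n by linarith)
    linarith
  set q := Real.exp 1 * (α * L2) with hq
  have hqpos : 0 < q := by positivity
  set r := (n : ℝ) / q with hr
  have hrq : r * q = n := by rw [hr]; field_simp
  have hrs : 6 * Real.sqrt n ≤ r := by
    rw [hr, le_div_iff₀ hqpos]
    nlinarith
  have hr72 : 72 ≤ r := by linarith
  refine ⟨h3, hL2pos, ⌊r / 36⌋₊, by linarith, ?_, ?_⟩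
  · set t := ⌊r / 36⌋₊
    have ht : r / 72 ≤ (t : ℝ) := by
      have := Nat.lt_floor_add_one (r / 36)
      change r / 36 < (t : ℝ) + 1 at this
      linarith
    have hlr : L1 / 2 ≤ Real.log (r / 6) := by
      rw [← hlogsq]
      exact Real.log_le_log (by linarith) (by linarith)
    have hmul : 2 * (n : ℝ) ≤ t * Real.log (r / 6) := by
      have a : r / 72 * (L1 / 2) ≤ t * Real.log (r / 6) := by
        apply mul_le_mul ht hlr <;> linarith
      have b : r * (288 * q) ≤ r * L1 := mul_le_mul_of_nonneg_left hdom (by linarith)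
      linarith
    have hexp : Real.exp (2 * n) ≤ (r / 6) ^ t := by
      rw [← Real.exp_log (show 0 < r / 6 by linarith), ← Real.exp_nat_mul]
      exact Real.exp_le_exp.2 hmul
    have h2n : (2 : ℝ) ^ n ≤ Real.exp n := by
      have : (2 : ℝ) ≤ Real.exp 1 := by linarith [Real.add_one_le_exp 1]
      calc (2 : ℝ) ^ n ≤ (Real.exp 1) ^ n := pow_le_pow_left₀ (by norm_num) this n
        _ = _ := by rw [← Real.exp_nat_mul]; simp
    have h6 : 6 ≤ Real.exp n := by linarith [Real.add_one_le_exp (n : ℝ)]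
    have hfin : 6 * 2 ^ n ≤ (r / 6) ^ t := by
      refine le_trans ?_ hexp
      rw [two_mul, Real.exp_add]
      gcongr
    have hinv : (6 / r) ^ t = ((r / 6) ^ t)⁻¹ := by rw [← inv_pow, inv_div]
    have hp : 0 < (r / 6) ^ t := by positivity
    rw [hinv, ← div_eq_mul_inv, div_le_div_iff₀ hp (by norm_num)]
    linarith
  · have := Nat.floor_le (show 0 ≤ r / 36 by linarith)
    linarith

lemma sf_small (D n : ℕ) [NeZero D]
    (F : Finset (Fin n → ZMod D)) (hF : SunflowerFreeZMod D n F) :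
    (F.card : ℝ) ≤ (36 * 2 ^ n) ^ n := by
  have h : (1 : ℝ) ≤ 2 ^ n := one_le_pow₀ (by norm_num)
  refine sf_main D n 1 (36 * 2 ^ n) (by linarith) ?_ (by simpa using h) F hF
  rw [pow_one]
  apply le_of_eq
  field_simp
  norm_num

lemma sf_l3_pos (n : ℕ) (hn : 16 ≤ n) :
    0 < Real.log (Real.log n) ∧ 0 < Real.log (Real.log (Real.log n)) := by
  have hn' : (16 : ℝ) ≤ n := by exact_mod_cast hn
  have h1 : Real.exp 1 < Real.log n := by
    have : Real.log 16 ≤ Real.log n := Real.log_le_log (by norm_num) hn'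
    have h16 : Real.log 16 = 4 * Real.log 2 := by
      rw [show (16 : ℝ) = 2 ^ 4 by norm_num, Real.log_pow]; norm_num
    linarith [Real.log_two_gt_d9, Real.exp_one_lt_d9]
  have h2 : 1 < Real.log (Real.log n) := by
    rw [Real.lt_log_iff_exp_lt ((Real.exp_pos 1).trans h1)]
    exact h1
  exact ⟨by linarith, Real.log_pos h2⟩

theorem sunflowerFree_zmod_bound_indep_of_D (α : ℝ) (hα : 1 < α) :
    ∃ K : ℝ, 0 < K ∧ ∀ D n : ℕ, 2 < D → 16 ≤ n →
      ∀ F : Finset (Fin n → ZMod D), SunflowerFreeZMod D n F →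
        (F.card : ℝ) ≤ K * (Nat.factorial n : ℝ) *
          ((Real.log (Real.log (Real.log n))) ^ 2 / (α * Real.log (Real.log n))) ^ n := by
  obtain ⟨N0, hN0⟩ := sf_large α hα
  let B : ℕ → ℝ := fun n => (Nat.factorial n : ℝ) *
          ((Real.log (Real.log (Real.log n))) ^ 2 / (α * Real.log (Real.log n))) ^ n
  let C : ℕ → ℝ := fun n => |(36 * 2 ^ n) ^ n / B n|
  have hsum : 0 ≤ ∑ n ∈ Finset.range N0, C n := Finset.sum_nonneg fun _ _ => abs_nonneg _
  refine ⟨1 + ∑ n ∈ Finset.range N0, C n, by linarith, ?_⟩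
  intro D n hD hn F hF
  have : NeZero D := ⟨by omega⟩
  have hB : 0 < B n := by
    obtain ⟨a, b⟩ := sf_l3_pos n hn
    have : 0 < α := by linarith
    simp only [B]
    positivity
  rw [mul_assoc]
  change _ ≤ _ * B n
  rcases lt_or_ge n N0 with h | h
  · have h1 : C n ≤ ∑ n ∈ Finset.range N0, C n :=
      Finset.single_le_sum (f := C) (fun _ _ => abs_nonneg _) (Finset.mem_range.2 h)
    calc (F.card : ℝ) ≤ (36 * 2 ^ n) ^ n := sf_small D n F hF
      _ = (36 * 2 ^ n) ^ n / B n * B n := by field_simp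
      _ ≤ C n * B n := by
        gcongr
        exact le_abs_self _
      _ ≤ _ := by gcongr; linarith
  · obtain ⟨h3, h2, t, c1, c2, c3⟩ := hN0 n h
    have hα0 : 0 < α := by linarith
    have hmain := sf_main D n t _ c1 c2 c3 F hF
    refine hmain.trans ?_
    have hfac : ((n : ℝ) / Real.exp 1) ^ n ≤ Nat.factorial n := by
      have := Real.pow_div_factorial_le_exp (n : ℝ) (by positivity) n
      rw [div_le_iff₀ (by positivity)] at this
      rw [div_pow, div_le_iff₀ (by positivity), ← Real.exp_nat_mul, mul_one]
      linarith
    calc _ = ((n : ℝ) / Real.exp 1) ^ n * (1 / (α * Real.log (Real.log n))) ^ n := by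
          rw [← mul_pow, div_mul_div_comm, mul_one]
      _ ≤ B n := by
          simp only [B]
          gcongr
          nlinarith
      _ ≤ _ := by nlinarith
end

section
/- Let n ≥ 1 and let D_1,…,D_n be integers with D_i ≥ 3, and set M := ∑_{i=1}^n D_i. Let C_1,…,C_n be pairwise disjoint sets with |C_i| = D_i whose union is a set X of size M, and let T denote the collection of all n-element subsets of X meeting each C_i in exactly one element (the transversals). Then there exists a bijection ψ: ℤ_{D_1} × … × ℤ_{D_n} → T such that for every family F ⊆ ℤ_{D_1} × … × ℤ_{D_n}, F is sunflower-free (in the coordinate sense) if and only if the set system ψ(F) := {ψ(v) : v ∈ F} is sunflower-free (contains no sunflower with 3 petals). -/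
/-- A family `F ⊆ ℤ_{D_1} × … × ℤ_{D_n}` is sunflower-free in the coordinate sense. -/
def SunflowerFreePi (n : ℕ) (D : Fin n → ℕ) (F : Finset (∀ i, ZMod (D i))) : Prop :=
  ∀ x ∈ F, ∀ y ∈ F, ∀ z ∈ F, x ≠ y → y ≠ z → x ≠ z →
    ∃ i : Fin n, ExactlyTwoEq (x i) (y i) (z i)

theorem exists_transversal_bijection {α : Type*} [DecidableEq α]
    (n : ℕ) (hn : 1 ≤ n) (D : Fin n → ℕ) (hD : ∀ i, 3 ≤ D i)
    (C : Fin n → Finset α) (hdisj : ∀ i j, i ≠ j → Disjoint (C i) (C j))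
    (hcard : ∀ i, (C i).card = D i)
    (X : Finset α) (hX : X = Finset.univ.biUnion C)
    (M : ℕ) (hM : M = ∑ i, D i) (hXcard : X.card = M)
    (T : Finset (Finset α))
    (hT : T = X.powerset.filter (fun S => S.card = n ∧ ∀ i, (S ∩ C i).card = 1)) :
    ∃ ψ : (∀ i, ZMod (D i)) → Finset α,
      Function.Injective ψ ∧ (∀ v, ψ v ∈ T) ∧ (∀ S ∈ T, ∃ v, ψ v = S) ∧
      ∀ F : Finset (∀ i, ZMod (D i)),
        SunflowerFreePi n D F ↔ SunflowerFree (F.image ψ) := by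
  have hne : ∀ i, NeZero (D i) := fun i => ⟨by have := hD i; omega⟩
  have hf : ∀ i, ∃ f : ZMod (D i) → α, Function.Injective f ∧ (∀ a, f a ∈ C i) ∧
      ∀ c ∈ C i, ∃ a, f a = c := by
    intro i
    have e : ZMod (D i) ≃ (C i) := Fintype.equivOfCardEq (by
      rw [ZMod.card, Fintype.card_coe, hcard])
    refine ⟨fun a => (e a : α), fun a b h => e.injective (Subtype.ext h), fun a => (e a).2, ?_⟩
    intro c hc
    exact ⟨e.symm ⟨c, hc⟩, by simp⟩
  choose f hinj hmem hsurj using hf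
  have hidx : ∀ i j c, c ∈ C i → c ∈ C j → i = j := by
    intro i j c hi hj
    by_contra h
    exact Finset.disjoint_left.1 (hdisj i j h) hi hj
  let ψ : (∀ i, ZMod (D i)) → Finset α := fun v => Finset.univ.image (fun i => f i (v i))
  have hψ : ∀ v c, c ∈ ψ v ↔ ∃ i, f i (v i) = c := by
    intro v c
    simp [ψ]
  have hψf : ∀ v i a, f i a ∈ ψ v ↔ v i = a := by
    intro v i a
    rw [hψ]
    constructor
    · rintro ⟨j, hj⟩
      have hji : j = i := hidx j i _ (hmem j (v j)) (hj ▸ hmem i a)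
      subst hji
      exact hinj _ hj
    · rintro rfl
      exact ⟨i, rfl⟩
  have hψinj : Function.Injective ψ := by
    intro v w h
    funext i
    have h1 : f i (w i) ∈ ψ w := (hψf w i _).2 rfl
    rw [← h] at h1
    exact (hψf v i _).1 h1
  have hsun : ∀ x y z, IsThreeSunflower (ψ x) (ψ y) (ψ z) ↔
      ∀ i, ¬ ExactlyTwoEq (x i) (y i) (z i) := by
    intro x y z
    constructor
    · rintro ⟨h1, h2, h3⟩ i
      have k1 := Finset.ext_iff.1 h1 (f i (x i))
      have k2 := Finset.ext_iff.1 h2 (f i (x i))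
      have k3 := Finset.ext_iff.1 h3 (f i (y i))
      simp only [Finset.mem_inter, hψf] at k1 k2 k3
      unfold ExactlyTwoEq
      grind
    · intro h
      have key : ∀ c, (c ∈ ψ x ∧ c ∈ ψ y → c ∈ ψ z) ∧ (c ∈ ψ x ∧ c ∈ ψ z → c ∈ ψ y) ∧
          (c ∈ ψ y ∧ c ∈ ψ z → c ∈ ψ x) := by
        intro c
        by_cases hc : ∃ i a, f i a = c
        · obtain ⟨i, a, rfl⟩ := hc
          have := h i
          unfold ExactlyTwoEq at this
          simp only [hψf]
          grind
        · have hn : ∀ v, c ∉ ψ v := by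
            intro v hv
            obtain ⟨i, hi⟩ := (hψ v c).1 hv
            exact hc ⟨i, _, hi⟩
          simp [hn]
      refine ⟨?_, ?_, ?_⟩ <;> ext c <;> have := key c <;> simp only [Finset.mem_inter] <;> tauto
  have hcardone : ∀ v i, ψ v ∩ C i = {f i (v i)} := by
    intro v i
    ext c
    simp only [Finset.mem_inter, Finset.mem_singleton]
    constructor
    · rintro ⟨h1, h2⟩
      obtain ⟨a, rfl⟩ := hsurj i c h2
      rw [(hψf v i a).1 h1]
    · rintro rfl
      exact ⟨(hψf v i _).2 rfl, hmem i _⟩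
  refine ⟨ψ, hψinj, ?_, ?_, ?_⟩
  · intro v
    rw [hT, Finset.mem_filter, Finset.mem_powerset]
    refine ⟨?_, ?_, ?_⟩
    · intro c hc
      obtain ⟨i, rfl⟩ := (hψ v c).1 hc
      rw [hX, Finset.mem_biUnion]
      exact ⟨i, Finset.mem_univ _, hmem i _⟩
    · have : Function.Injective (fun i => f i (v i)) := by
        intro i j h
        exact hidx i j _ (hmem i (v i)) (by
          have h' : f i (v i) = f j (v j) := h
          rw [h']; exact hmem j _)
      simp only [ψ]
      rw [Finset.card_image_of_injective _ this]
      simp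
    · intro i
      rw [hcardone, Finset.card_singleton]
  · intro S hS
    rw [hT, Finset.mem_filter, Finset.mem_powerset] at hS
    obtain ⟨hSX, -, hS1⟩ := hS
    have hv : ∀ i, ∃ a, S ∩ C i = {f i a} := by
      intro i
      obtain ⟨c, hc⟩ := Finset.card_eq_one.1 (hS1 i)
      have hc' : c ∈ S ∩ C i := by rw [hc]; exact Finset.mem_singleton_self c
      obtain ⟨a, rfl⟩ := hsurj i c (Finset.mem_inter.1 hc').2
      exact ⟨a, hc⟩
    choose v hv using hv
    refine ⟨v, ?_⟩
    ext c
    rw [hψ]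
    constructor
    · rintro ⟨i, rfl⟩
      have : f i (v i) ∈ S ∩ C i := by rw [hv]; exact Finset.mem_singleton_self _
      exact (Finset.mem_inter.1 this).1
    · intro hc
      have hcX := hSX hc
      rw [hX, Finset.mem_biUnion] at hcX
      obtain ⟨i, -, hi⟩ := hcX
      have : c ∈ S ∩ C i := Finset.mem_inter.2 ⟨hc, hi⟩
      rw [hv, Finset.mem_singleton] at this
      exact ⟨i, this.symm⟩
  · intro F
    constructor
    · rintro h ⟨A, hA, B, hB, E, hE, hAB, hAE, hBE, hs⟩
      obtain ⟨x, hx, rfl⟩ := Finset.mem_image.1 hA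
      obtain ⟨y, hy, rfl⟩ := Finset.mem_image.1 hB
      obtain ⟨z, hz, rfl⟩ := Finset.mem_image.1 hE
      obtain ⟨i, hi⟩ := h x hx y hy z hz (fun e => hAB (e ▸ rfl)) (fun e => hBE (e ▸ rfl))
        (fun e => hAE (e ▸ rfl))
      exact (hsun x y z).1 hs i hi
    · intro h x hx y hy z hz hxy hyz hxz
      by_contra hcon
      exact h ⟨ψ x, Finset.mem_image_of_mem _ hx, ψ y, Finset.mem_image_of_mem _ hy,
        ψ z, Finset.mem_image_of_mem _ hz, fun e => hxy (hψinj e), fun e => hxz (hψinj e),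
        fun e => hyz (hψinj e), (hsun x y z).2 (fun i hi => hcon ⟨i, hi⟩)⟩
end

section
/- Let D > 2 and n ≥ 1 be integers and let F ⊆ (ℤ_D)^n be a sunflower-free family. Then |F| ≤ c_D^n, where c_D = (3/2^{2/3})·(D−1)^{2/3}. -/
open Finset in
theorem ns_support {X : Type*} [Fintype X] [DecidableEq X] (V : Submodule ℝ (X → ℝ)) :
    ∃ h ∈ V, Module.finrank ℝ V ≤ (univ.filter (fun x => h x ≠ 0)).card := by
  classical
  obtain ⟨S, ⟨h, hV, rfl⟩, hmax⟩ := Set.exists_max_image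
    {S : Finset X | ∃ h ∈ V, univ.filter (fun x => h x ≠ 0) = S} Finset.card (Set.toFinite _)
    ⟨_, 0, V.zero_mem, rfl⟩
  refine ⟨h, hV, ?_⟩
  by_contra! hlt
  set S := univ.filter (fun x => h x ≠ 0) with hS
  let L : V →ₗ[ℝ] (S → ℝ) := (LinearMap.funLeft ℝ ℝ (Subtype.val : S → X)).comp V.subtype
  have hk : LinearMap.ker L ≠ ⊥ := by
    apply LinearMap.ker_ne_bot_of_finrank_lt
    simpa using hlt
  obtain ⟨v, hv, hv0⟩ := (Submodule.ne_bot_iff _).1 hk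
  have hvS : ∀ x ∈ S, v.1 x = 0 := fun x hx => congrFun (LinearMap.mem_ker.1 hv) ⟨x, hx⟩
  have : ∃ x, v.1 x ≠ 0 := by
    by_contra! hc
    exact hv0 (Subtype.ext (funext hc))
  obtain ⟨x0, hx0⟩ := this
  have hle := hmax _ ⟨h + v.1, V.add_mem hV v.2, rfl⟩
  have hx0S : x0 ∉ S := fun hx => hx0 (hvS _ hx)
  have hh0 : h x0 = 0 := by simpa [hS] using hx0S
  have hss : S ⊂ univ.filter (fun x => (h + v.1) x ≠ 0) := by
    refine Finset.ssubset_iff_subset_ne.2 ⟨?_, ?_⟩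
    · intro x hx
      have h1 := hvS x hx
      have h2 : h x ≠ 0 := by simpa [hS] using hx
      simp [h1, h2]
    · intro he
      apply hx0S
      rw [he]
      simp [hh0, hx0]
  exact absurd (Finset.card_lt_card hss) (by omega)

theorem ns_slice {X A B C : Type*} [Fintype X] [DecidableEq X] [Fintype A] [Fintype B] [Fintype C]
    (T : X → X → X → ℝ) (f1 : A → X → ℝ) (g1 : A → X → X → ℝ)
    (f2 : B → X → ℝ) (g2 : B → X → X → ℝ) (f3 : C → X → ℝ) (g3 : C → X → X → ℝ)
    (hT : ∀ x y z, T x y z = ∑ a, f1 a x * g1 a y z + ∑ b, f2 b y * g2 b x z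
      + ∑ c, f3 c z * g3 c x y)
    (hd : ∀ x y z, T x y z ≠ 0 → x = y ∧ y = z) (hn : ∀ x, T x x x ≠ 0) :
    Fintype.card X ≤ Fintype.card A + Fintype.card B + Fintype.card C := by
  classical
  let L : (X → ℝ) →ₗ[ℝ] (C → ℝ) := (Matrix.of f3).mulVecLin
  obtain ⟨h, hV, hcard⟩ := ns_support (LinearMap.ker L)
  have hrn := L.finrank_range_add_finrank_ker
  have hr : Module.finrank ℝ (LinearMap.range L) ≤ Fintype.card C := by
    simpa using Submodule.finrank_le (LinearMap.range L)
  have hL : ∀ c, ∑ z, f3 c z * h z = 0 := fun c => congrFun (LinearMap.mem_ker.1 hV) c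
  let P : Matrix X (A ⊕ B) ℝ := Matrix.of fun x s =>
    Sum.elim (fun a => f1 a x) (fun b => ∑ z, h z * g2 b x z) s
  let Q : Matrix (A ⊕ B) X ℝ := Matrix.of fun s y =>
    Sum.elim (fun a => ∑ z, h z * g1 a y z) (fun b => f2 b y) s
  have key : Matrix.diagonal (fun x => h x * T x x x) = P * Q := by
    ext x y
    have e1 : ∑ z, h z * T x y z = (P * Q) x y := by
      simp only [hT, Matrix.mul_apply, Fintype.sum_sum_type, P, Q, Matrix.of_apply, Sum.elim_inl,
        Sum.elim_inr, mul_add, Finset.sum_add_distrib, Finset.mul_sum, Finset.sum_mul]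
      have e3 : ∑ z, ∑ c, h z * (f3 c z * g3 c x y) = 0 := by
        rw [Finset.sum_comm]
        apply Finset.sum_eq_zero
        intro c _
        have := hL c
        calc _ = (∑ z, f3 c z * h z) * g3 c x y := by
              rw [Finset.sum_mul]; apply Finset.sum_congr rfl; intros; ring
          _ = 0 := by rw [this, zero_mul]
      rw [e3, add_zero]
      congr 1
      · rw [Finset.sum_comm]
        refine Finset.sum_congr rfl fun _ _ => Finset.sum_congr rfl fun _ _ => by ring
      · rw [Finset.sum_comm]
        refine Finset.sum_congr rfl fun _ _ => Finset.sum_congr rfl fun _ _ => by ring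
    rw [← e1]
    by_cases hxy : x = y
    · subst hxy
      rw [Matrix.diagonal_apply_eq, Finset.sum_eq_single x]
      · intro z _ hz
        by_contra hc
        exact hz (hd x x z (right_ne_zero_of_mul hc)).2.symm
      · simp
    · rw [Matrix.diagonal_apply_ne _ hxy, Finset.sum_eq_zero]
      intro z _
      by_contra hc
      exact hxy (hd x y z (right_ne_zero_of_mul hc)).1
  have hrank : (P * Q).rank ≤ Fintype.card A + Fintype.card B := by
    refine (Matrix.rank_mul_le_left P Q).trans ((Matrix.rank_le_card_width P).trans ?_)
    simp
  rw [← key, Matrix.rank_diagonal, Fintype.card_subtype] at hrank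
  have : (Finset.univ.filter (fun x => h x * T x x x ≠ 0))
      = Finset.univ.filter (fun x => h x ≠ 0) := by
    ext x; simp [hn x]
  rw [this] at hrank
  simp only [Module.finrank_fintype_fun_eq_card] at hrn
  omega

section
variable {α : Type*} [Fintype α] [DecidableEq α]

def nsDelta (a b : α) : ℝ := if a = b then 1 else 0

def nsE (o v a : α) : ℝ := if v = o then 1 else nsDelta v a

def nsM (o v p : α) : ℝ := if v = o then (if p = o then 1 else -1) else nsDelta v p

def nsD (o p q : α) : ℝ := ∑ v, nsM o v p * nsM o v q

def nsC (o : α) (t : α × α × α) : ℝ :=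
  nsD o t.1 t.2.1 * nsDelta t.2.2 o + nsD o t.2.1 t.2.2 * nsDelta t.1 o
    + nsD o t.1 t.2.2 * nsDelta t.2.1 o - nsDelta t.1 o * nsDelta t.2.1 o * nsDelta t.2.2 o

def nsT (a b c : α) : ℝ := nsDelta a b + nsDelta b c + nsDelta a c - 1

theorem nsM_spec (o v a : α) : ∑ p, nsM o v p * nsE o p a = nsDelta v a := by
  by_cases hv : v = o
  · subst hv
    rw [← Finset.add_sum_erase _ _ (Finset.mem_univ v)]
    have : ∑ p ∈ Finset.univ.erase v, nsM v v p * nsE v p a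
        = ∑ p ∈ Finset.univ.erase v, - (if p = a then (1:ℝ) else 0) := by
      refine Finset.sum_congr rfl fun p hp => ?_
      have : p ≠ v := Finset.ne_of_mem_erase hp
      simp only [nsM, nsE, nsDelta, this, if_false, if_true]
      ring
    rw [this, Finset.sum_neg_distrib, Finset.sum_ite_eq']
    by_cases h : a = v
    · simp [nsM, nsE, nsDelta, h]
    · simp [nsM, nsE, nsDelta, h, Ne.symm h]
  · rw [Finset.sum_eq_single v]
    · simp [nsM, nsE, nsDelta, hv]
    · intro p _ hp
      simp [nsM, nsDelta, hv, hp.symm]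
    · simp

theorem nsD_spec (o a b : α) : ∑ p, ∑ q, nsD o p q * (nsE o p a * nsE o q b) = nsDelta a b := by
  have : ∀ v, nsDelta v a * nsDelta v b
      = ∑ p, ∑ q, nsM o v p * nsM o v q * (nsE o p a * nsE o q b) := by
    intro v
    rw [← nsM_spec o v a, ← nsM_spec o v b, Finset.sum_mul_sum]
    refine Finset.sum_congr rfl fun _ _ => Finset.sum_congr rfl fun _ _ => by ring
  have h2 : ∑ v, nsDelta v a * nsDelta v b = nsDelta a b := by
    simp [nsDelta, eq_comm]
  rw [← h2]
  simp only [this, nsD, Finset.sum_mul]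
  rw [Finset.sum_comm]
  conv_lhs => rw [Finset.sum_comm]
  conv_lhs => enter [2, p]; rw [Finset.sum_comm]
  rw [Finset.sum_comm]

theorem nsDelta_sum (o a : α) : ∑ p, nsDelta p o * nsE o p a = 1 := by
  rw [Finset.sum_eq_single o]
  · simp [nsDelta, nsE]
  · intro p _ hp
    simp [nsDelta, hp]
  · simp

theorem nsC_spec (o a b c : α) :
    nsT a b c = ∑ t : α × α × α, nsC o t * (nsE o t.1 a * nsE o t.2.1 b * nsE o t.2.2 c) := by
  have e1 : nsDelta a b = ∑ p, ∑ q, ∑ r, nsD o p q * nsDelta r o *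
      (nsE o p a * nsE o q b * nsE o r c) := by
    rw [← nsD_spec o a b]
    refine Finset.sum_congr rfl fun p _ => Finset.sum_congr rfl fun q _ => ?_
    rw [← mul_one (nsD o p q * _), ← nsDelta_sum o c, Finset.mul_sum]
    exact Finset.sum_congr rfl fun _ _ => by ring
  have e2 : nsDelta b c = ∑ p, ∑ q, ∑ r, nsD o q r * nsDelta p o *
      (nsE o p a * nsE o q b * nsE o r c) := by
    rw [← one_mul (nsDelta b c), ← nsDelta_sum o a, ← nsD_spec o b c, Finset.sum_mul]
    refine Finset.sum_congr rfl fun p _ => ?_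
    simp only [Finset.mul_sum]
    exact Finset.sum_congr rfl fun _ _ => Finset.sum_congr rfl fun _ _ => by ring
  have e3 : nsDelta a c = ∑ p, ∑ q, ∑ r, nsD o p r * nsDelta q o *
      (nsE o p a * nsE o q b * nsE o r c) := by
    rw [← one_mul (nsDelta a c), ← nsDelta_sum o b, ← nsD_spec o a c, Finset.sum_mul]
    simp only [Finset.mul_sum]
    rw [Finset.sum_comm]
    exact Finset.sum_congr rfl fun _ _ => Finset.sum_congr rfl fun _ _ =>
      Finset.sum_congr rfl fun _ _ => by ring
  have e4 : (1 : ℝ) = ∑ p, ∑ q, ∑ r, nsDelta p o * nsDelta q o * nsDelta r o *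
      (nsE o p a * nsE o q b * nsE o r c) := by
    have : (1 : ℝ) = (∑ p, nsDelta p o * nsE o p c) * ((∑ p, nsDelta p o * nsE o p b) *
        (∑ p, nsDelta p o * nsE o p a)) := by simp only [nsDelta_sum, mul_one]
    rw [this]
    simp only [Finset.sum_mul, Finset.mul_sum]
    exact Finset.sum_congr rfl fun _ _ => Finset.sum_congr rfl fun _ _ =>
      Finset.sum_congr rfl fun _ _ => by ring
  rw [nsT, e1, e2, e3]
  conv_lhs => rw [e4]
  simp only [Fintype.sum_prod_type, ← Finset.sum_add_distrib, ← Finset.sum_sub_distrib, nsC]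
  exact Finset.sum_congr rfl fun _ _ => Finset.sum_congr rfl fun _ _ =>
      Finset.sum_congr rfl fun _ _ => by ring

theorem nsC_zero (o : α) (t : α × α × α) (h : nsC o t ≠ 0) :
    (if t.1 = o then 0 else 1) + (if t.2.1 = o then 0 else 1) + (if t.2.2 = o then 0 else 1)
      ≤ 2 := by
  by_contra hc
  apply h
  have : t.1 ≠ o ∧ t.2.1 ≠ o ∧ t.2.2 ≠ o := by
    split_ifs at hc <;> simp_all
  simp [nsC, nsDelta, this]

theorem nsT_ne (a b c : α) : nsT a b c ≠ 0 ↔ ¬ ExactlyTwoEq a b c := by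
  unfold nsT nsDelta ExactlyTwoEq
  by_cases h1 : a = b <;> by_cases h2 : b = c <;> by_cases h3 : a = c <;> simp_all

variable {ι : Type*} [Fintype ι] [DecidableEq ι]

def nsDeg (o : α) (w : ι → α) : ℕ := ∑ i, if w i = o then 0 else 1

theorem ns_bound3 (o : α) (F : Finset (ι → α))
    (hF : ∀ x ∈ F, ∀ y ∈ F, ∀ z ∈ F, (∀ i, ¬ ExactlyTwoEq (x i) (y i) (z i)) → x = y ∧ y = z) :
    F.card ≤ 3 * Fintype.card {w : ι → α // 3 * nsDeg o w ≤ 2 * Fintype.card ι} := by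
  classical
  let φ : (ι → α) → (ι → α) → ℝ := fun w x => ∏ i, nsE o (w i) (x i)
  let S : (ι → α) → Prop := fun w => 3 * nsDeg o w ≤ 2 * Fintype.card ι
  let K : (ι → α) → (ι → α) → (ι → α) → ℝ := fun p q r => ∏ i, nsC o (p i, q i, r i)
  have hK : ∀ p q r, K p q r ≠ 0 → S p ∨ S q ∨ S r := by
    intro p q r h
    have h1 : ∀ i, nsC o (p i, q i, r i) ≠ 0 := by
      simpa [K, Finset.prod_ne_zero_iff] using h
    have h2 : nsDeg o p + nsDeg o q + nsDeg o r ≤ 2 * Fintype.card ι := by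
      simp only [nsDeg, ← Finset.sum_add_distrib]
      calc _ ≤ ∑ i : ι, 2 := Finset.sum_le_sum fun i _ => nsC_zero o _ (h1 i)
        _ = _ := by simp [mul_comm]
    simp only [S]
    omega
  let T : (ι → α) → (ι → α) → (ι → α) → ℝ := fun x y z => ∏ i, nsT (x i) (y i) (z i)
  have hT : ∀ x y z, T x y z = ∑ p, ∑ q, ∑ r, K p q r * (φ p x * φ q y * φ r z) := by
    intro x y z
    simp only [T, nsC_spec o, Finset.prod_univ_sum, Fintype.piFinset_univ]
    let e : (ι → α × α × α) ≃ (ι → α) × (ι → α) × (ι → α) :=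
      { toFun := fun t => (fun i => (t i).1, fun i => (t i).2.1, fun i => (t i).2.2)
        invFun := fun u i => (u.1 i, u.2.1 i, u.2.2 i)
        left_inv := fun t => rfl
        right_inv := fun u => rfl }
    rw [← Equiv.sum_comp e.symm]
    simp only [Fintype.sum_prod_type]
    refine Finset.sum_congr rfl fun _ _ => Finset.sum_congr rfl fun _ _ =>
      Finset.sum_congr rfl fun _ _ => ?_
    simp [e, K, φ, Finset.prod_mul_distrib]
  have hsub : ∀ f : (ι → α) → ℝ, ∑ a : {w // S w}, f a.1 = ∑ p, if S p then f p else 0 := by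
    intro f
    rw [← Finset.sum_filter]
    exact (Finset.sum_subtype _ (by simp) f).symm
  have hs := ns_slice (X := F) (A := {w // S w}) (B := {w // S w}) (C := {w // S w})
    (fun x y z => T x.1 y.1 z.1)
    (fun a x => φ a.1 x.1) (fun a y z => ∑ q, ∑ r, K a.1 q r * (φ q y.1 * φ r z.1))
    (fun a x => φ a.1 x.1) (fun a x z => ∑ p, ∑ r, if S p then 0 else K p a.1 r * (φ p x.1 * φ r z.1))
    (fun a x => φ a.1 x.1)
    (fun a x y => ∑ p, ∑ q, if S p ∨ S q then 0 else K p q a.1 * (φ p x.1 * φ q y.1))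
    ?_ ?_ ?_
  · simp only [Fintype.card_coe] at hs
    refine hs.trans (le_of_eq ?_)
    have : Fintype.card {w : ι → α // 3 * nsDeg o w ≤ 2 * Fintype.card ι}
      = Fintype.card {w // S w} := Fintype.card_congr (Equiv.refl _)
    rw [this]; ring
  · intro x y z
    rw [hT, hsub (fun a => φ a x.1 * ∑ q, ∑ r, K a q r * (φ q y.1 * φ r z.1)),
      hsub (fun a => φ a y.1 * ∑ p, ∑ r, if S p then 0 else K p a r * (φ p x.1 * φ r z.1)),
      hsub (fun a => φ a z.1 *
        ∑ p, ∑ q, if S p ∨ S q then 0 else K p q a * (φ p x.1 * φ q y.1))]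
    have a1 : (∑ p, if S p then φ p x.1 * ∑ q, ∑ r, K p q r * (φ q y.1 * φ r z.1) else 0)
        = ∑ p, ∑ q, ∑ r, if S p then K p q r * (φ p x.1 * φ q y.1 * φ r z.1) else 0 := by
      refine Finset.sum_congr rfl fun p _ => ?_
      split_ifs
      · simp only [Finset.mul_sum]
        exact Finset.sum_congr rfl fun _ _ => Finset.sum_congr rfl fun _ _ => by ring
      · simp
    have a2 : (∑ q, if S q then φ q y.1 * ∑ p, ∑ r,
          (if S p then 0 else K p q r * (φ p x.1 * φ r z.1)) else 0)
        = ∑ p, ∑ q, ∑ r, if S q ∧ ¬ S p then K p q r * (φ p x.1 * φ q y.1 * φ r z.1) else 0 := by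
      conv_rhs => rw [Finset.sum_comm]
      refine Finset.sum_congr rfl fun q _ => ?_
      by_cases hq : S q
      · simp only [hq, if_true, true_and, Finset.mul_sum]
        refine Finset.sum_congr rfl fun p _ => Finset.sum_congr rfl fun _ _ => ?_
        by_cases hp : S p
        · simp [hp]
        · simp only [hp, if_false, not_false_eq_true, if_true]; ring
      · simp [hq]
    have a3 : (∑ r, if S r then φ r z.1 * ∑ p, ∑ q,
          (if S p ∨ S q then 0 else K p q r * (φ p x.1 * φ q y.1)) else 0)
        = ∑ p, ∑ q, ∑ r, if S r ∧ ¬ (S p ∨ S q) then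
            K p q r * (φ p x.1 * φ q y.1 * φ r z.1) else 0 := by
      conv_rhs => enter [2, p]; rw [Finset.sum_comm]
      conv_rhs => rw [Finset.sum_comm]
      refine Finset.sum_congr rfl fun r _ => ?_
      by_cases hr : S r
      · simp only [hr, if_true, true_and, Finset.mul_sum]
        refine Finset.sum_congr rfl fun p _ => Finset.sum_congr rfl fun q _ => ?_
        by_cases hp : S p ∨ S q
        · simp [hp]
        · simp only [hp, if_false, not_false_eq_true, if_true]; ring
      · simp [hr]
    rw [a1, a2, a3]
    simp only [← Finset.sum_add_distrib]
    refine Finset.sum_congr rfl fun p _ => Finset.sum_congr rfl fun q _ =>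
      Finset.sum_congr rfl fun r _ => ?_
    have := hK p q r
    by_cases h0 : K p q r = 0
    · simp [h0]
    · have h3 := this h0
      clear this h0
      generalize K p q r * (φ p x.1 * φ q y.1 * φ r z.1) = u
      by_cases hp : S p <;> by_cases hq : S q <;> by_cases hr : S r <;>
        simp only [hp, hq, hr, or_self, or_true, or_false, true_or, false_or, and_true, and_false,
          true_and, false_and, not_true_eq_false, not_false_eq_true, if_true, if_false, add_zero,
          zero_add] at h3 ⊢
  · intro x y z h
    have h1 : ∀ i, nsT (x.1 i) (y.1 i) (z.1 i) ≠ 0 := by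
      simpa [T, Finset.prod_ne_zero_iff] using h
    have := hF x x.2 y y.2 z z.2 (fun i => (nsT_ne _ _ _).1 (h1 i))
    exact ⟨Subtype.ext this.1, Subtype.ext this.2⟩
  · intro x
    simp only [T, Finset.prod_ne_zero_iff]
    intro i _
    rw [nsT_ne]
    simp [ExactlyTwoEq]

theorem ns_count (o : α) (hD : 2 < Fintype.card α) :
    (Fintype.card {w : ι → α // 3 * nsDeg o w ≤ 2 * Fintype.card ι} : ℝ)
      ≤ ((3 / 2 ^ ((2 : ℝ) / 3)) * ((Fintype.card α : ℝ) - 1) ^ ((2 : ℝ) / 3)) ^ Fintype.card ι := by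
  classical
  have hD' : (3 : ℝ) ≤ Fintype.card α := by exact_mod_cast hD
  set d : ℝ := (Fintype.card α : ℝ) - 1 with hd
  have hd2 : 2 ≤ d := by linarith
  have hd0 : 0 < d := by linarith
  set t : ℝ := 2 / d with ht
  have ht0 : 0 < t := by positivity
  have ht1 : t ≤ 1 := by rw [ht, div_le_one hd0]; exact hd2
  have hsum : ∑ w : ι → α, t ^ nsDeg o w = 3 ^ Fintype.card ι := by
    have h1 : ∑ v : α, t ^ (if v = o then 0 else 1) = 3 := by
      rw [← Finset.add_sum_erase _ _ (Finset.mem_univ o)]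
      have : ∑ v ∈ Finset.univ.erase o, t ^ (if v = o then 0 else 1)
          = ∑ v ∈ Finset.univ.erase o, t := by
        refine Finset.sum_congr rfl fun p hp => ?_
        simp [Finset.ne_of_mem_erase hp]
      rw [this, Finset.sum_const, Finset.card_erase_of_mem (Finset.mem_univ o), Finset.card_univ,
        nsmul_eq_mul, Nat.cast_sub (by omega), Nat.cast_one, ← hd, ht]
      simp only [if_true, pow_zero]
      field_simp
      norm_num
    have h2 := Finset.prod_univ_sum (fun _ : ι => (Finset.univ : Finset α))
      (fun _ v => t ^ (if v = o then 0 else 1))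
    rw [h1, Finset.prod_const, Finset.card_univ, Fintype.piFinset_univ] at h2
    rw [h2]
    refine Finset.sum_congr rfl fun w _ => ?_
    rw [nsDeg, Finset.prod_pow_eq_pow_sum]
  have hle : (Fintype.card {w : ι → α // 3 * nsDeg o w ≤ 2 * Fintype.card ι} : ℝ)
      * (t ^ ((2 : ℝ) / 3)) ^ Fintype.card ι ≤ 3 ^ Fintype.card ι := by
    rw [← hsum, Fintype.card_subtype, ← nsmul_eq_mul, ← Finset.sum_const]
    refine (Finset.sum_le_sum fun w hw => ?_).trans
      (Finset.sum_le_sum_of_subset_of_nonneg (Finset.filter_subset _ _)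
        fun _ _ _ => by positivity)
    have hw' : 3 * nsDeg o w ≤ 2 * Fintype.card ι := by simpa using hw
    have hw2 : (3 : ℝ) * nsDeg o w ≤ 2 * Fintype.card ι := by exact_mod_cast hw'
    rw [← Real.rpow_natCast, ← Real.rpow_mul ht0.le, ← Real.rpow_natCast t]
    apply Real.rpow_le_rpow_of_exponent_ge ht0 ht1
    linarith
  have hc : (3 / 2 ^ ((2 : ℝ) / 3)) * d ^ ((2 : ℝ) / 3) = 3 / t ^ ((2 : ℝ) / 3) := by
    rw [ht, Real.div_rpow (by norm_num) hd0.le]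
    have : (0:ℝ) < d ^ ((2 : ℝ) / 3) := by positivity
    field_simp
  rw [hc, div_pow, le_div_iff₀ (by positivity)]
  exact hle

end

theorem naslund_sawin_zmod_bound (D n : ℕ) (hD : 2 < D) (hn : 1 ≤ n)
    (F : Finset (Fin n → ZMod D)) (hF : SunflowerFreeZMod D n F) :
    (F.card : ℝ) ≤ ((3 / 2 ^ ((2 : ℝ) / 3)) * ((D : ℝ) - 1) ^ ((2 : ℝ) / 3)) ^ n := by
  classical
  have : NeZero D := ⟨by omega⟩
  have hF' : ∀ x ∈ F, ∀ y ∈ F, ∀ z ∈ F, (∀ i, ¬ ExactlyTwoEq (x i) (y i) (z i)) →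
      x = y ∧ y = z := by
    intro x hx y hy z hz h
    simp only [ExactlyTwoEq] at h
    by_cases h1 : x = y
    · subst h1
      refine ⟨rfl, funext fun i => ?_⟩
      have := h i
      tauto
    by_cases h2 : y = z
    · subst h2
      exact ⟨funext fun i => by have := h i; tauto, rfl⟩
    by_cases h3 : x = z
    · subst h3
      exact absurd (funext fun i => by have := h i; tauto) h1
    obtain ⟨i, hi⟩ := hF x hx y hy z hz h1 h2 h3
    exact absurd hi (h i)
  set c : ℝ := (3 / 2 ^ ((2 : ℝ) / 3)) * ((D : ℝ) - 1) ^ ((2 : ℝ) / 3) with hc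
  have hD' : (3 : ℝ) ≤ D := by exact_mod_cast hD
  have hc0 : 0 < c := by
    have : (0:ℝ) < (D : ℝ) - 1 := by linarith
    positivity
  have hm : ∀ m : ℕ, (F.card : ℝ) ^ m ≤ 3 * (c ^ n) ^ m := by
    intro m
    let e : (Fin m → Fin n → ZMod D) ↪ (Fin m × Fin n → ZMod D) :=
      (Equiv.curry (Fin m) (Fin n) (ZMod D)).symm.toEmbedding
    let G := (Fintype.piFinset (fun _ : Fin m => F)).map e
    have hG : G.card = F.card ^ m := by simp [G]
    have h1 := ns_bound3 (0 : ZMod D) G (by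
      intro x hx y hy z hz h
      obtain ⟨x, hx1, rfl⟩ := Finset.mem_map.1 hx
      obtain ⟨y, hy1, rfl⟩ := Finset.mem_map.1 hy
      obtain ⟨z, hz1, rfl⟩ := Finset.mem_map.1 hz
      rw [Fintype.mem_piFinset] at hx1 hy1 hz1
      have hj : ∀ j, x j = y j ∧ y j = z j := fun j =>
        hF' _ (hx1 j) _ (hy1 j) _ (hz1 j) (fun i => h (j, i))
      exact ⟨congrArg e (funext fun j => (hj j).1), congrArg e (funext fun j => (hj j).2)⟩)
    have h2 := ns_count (ι := Fin m × Fin n) (0 : ZMod D) (by rw [ZMod.card]; exact hD)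
    rw [hG] at h1
    have h1' : (F.card : ℝ) ^ m ≤ 3 * (Fintype.card {w : Fin m × Fin n → ZMod D //
      3 * nsDeg 0 w ≤ 2 * Fintype.card (Fin m × Fin n)} : ℝ) := by exact_mod_cast h1
    refine h1'.trans (mul_le_mul_of_nonneg_left ?_ (by norm_num))
    refine h2.trans (le_of_eq ?_)
    rw [ZMod.card, ← hc, Fintype.card_prod, Fintype.card_fin, Fintype.card_fin, ← pow_mul,
      mul_comm]
  by_contra! hlt
  have hcn : 0 < c ^ n := by positivity
  obtain ⟨m, hm'⟩ := pow_unbounded_of_one_lt (3 : ℝ) ((one_lt_div hcn).2 hlt)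
  rw [div_pow, lt_div_iff₀ (by positivity)] at hm'
  exact absurd (hm m) (not_le.2 hm')
end

section
/- Let p > 2 be an odd prime and n ≥ 1 an integer. Every sunflower-free family F ⊆ (ℤ_p)^n satisfies |F| ≤ (J(p)·p)^n, where J(q) := (1/q)·inf_{0<x<1} ((1 − x^q)/(1 − x))·x^{−(q−1)/3}. -/
/-- The Ellenberg–Gijswijt constant
`J(q) = (1/q) · inf_{0<x<1} ((1 - x^q)/(1 - x)) · x^{-(q-1)/3}`. -/
noncomputable def egJ (q : ℝ) : ℝ :=
  (1 / q) * sInf {y : ℝ | ∃ x : ℝ, 0 < x ∧ x < 1 ∧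
    y = ((1 - x ^ q) / (1 - x)) * x ^ (-(q - 1) / 3)}

open Finset in
lemma eg_exists_support {K α : Type*} [Field K] [Fintype α] [DecidableEq α] [DecidableEq K]
    (W : Submodule K (α → K)) :
    ∃ h ∈ W, Module.finrank K W ≤ (univ.filter (fun a => h a ≠ 0)).card := by
  classical
  obtain ⟨s, hs, hmax⟩ : ∃ h ∈ (W : Set (α → K)), ∀ g ∈ (W : Set (α → K)),
      (univ.filter (fun a => g a ≠ 0)).card ≤ (univ.filter (fun a => h a ≠ 0)).card := by
    let P : ℕ → Prop := fun k => ∃ h ∈ W, (univ.filter (fun a => h a ≠ 0)).card = k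
    have hb : ∀ k, P k → k ≤ Fintype.card α := by
      rintro k ⟨h, _, rfl⟩
      exact card_le_univ _
    have h0 : P 0 := ⟨0, W.zero_mem, by simp⟩
    obtain ⟨h, hW, hh⟩ := Nat.findGreatest_spec (P := P) (Nat.zero_le (Fintype.card α)) h0
    refine ⟨h, hW, fun g hg => ?_⟩
    rw [hh]
    exact Nat.le_findGreatest (hb _ ⟨g, hg, rfl⟩) ⟨g, hg, rfl⟩
  refine ⟨s, hs, ?_⟩
  by_contra hlt
  push Not at hlt
  let S := univ.filter (fun a => s a ≠ 0)
  let L : W →ₗ[K] (S → K) := (LinearMap.funLeft K K (fun a : S => (a : α))).comp W.subtype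
  have hker : LinearMap.ker L ≠ ⊥ := by
    apply LinearMap.ker_ne_bot_of_finrank_lt
    rw [Module.finrank_fintype_fun_eq_card, Fintype.card_coe]
    exact hlt
  obtain ⟨g, hg, hg0⟩ := (Submodule.ne_bot_iff _).1 hker
  have hgS : ∀ a, s a ≠ 0 → (g : α → K) a = 0 := by
    intro a ha
    have := congrFun (LinearMap.mem_ker.1 hg) ⟨a, by simp [S, ha]⟩
    simpa [L, LinearMap.funLeft_apply] using this
  obtain ⟨b, hb⟩ : ∃ b, (g : α → K) b ≠ 0 := by
    by_contra hcon
    push Not at hcon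
    exact hg0 (Subtype.ext (funext hcon))
  have := hmax (s + g) (W.add_mem hs g.2)
  have hlt2 : (univ.filter (fun a => s a ≠ 0)).card <
      (univ.filter (fun a => (s + (g : α → K)) a ≠ 0)).card := by
    apply card_lt_card
    rw [ssubset_iff_of_subset]
    · refine ⟨b, ?_, ?_⟩
      · have : s b = 0 := by
          by_contra h
          exact hb (hgS b h)
        simp [this, hb]
      · simp only [mem_filter, mem_univ, true_and, not_not]
        by_contra h
        exact hb (hgS b h)
    · intro a ha
      simp only [mem_filter, mem_univ, true_and, Pi.add_apply] at ha ⊢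
      rw [hgS a ha]
      simpa using ha
  omega

lemma eg_rank_add {K α : Type*} [Field K] [Fintype α] [DecidableEq α] (A B : Matrix α α K) :
    (A + B).rank ≤ A.rank + B.rank := by
  unfold Matrix.rank
  rw [Matrix.mulVecLin_add]
  refine le_trans (Submodule.finrank_mono ?_) (Submodule.finrank_add_le_finrank_add_finrank _ _)
  rintro _ ⟨v, rfl⟩
  exact Submodule.add_mem_sup ⟨v, rfl⟩ ⟨v, rfl⟩

open Finset in
lemma eg_slice {K α M : Type*} [Field K] [Fintype α] [DecidableEq α] [Fintype M]
    (f : M → α → K) (g₁ g₂ g₃ : M → α → α → K)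
    (H : ∀ x y z, (if x = y ∧ y = z then (1 : K) else 0) =
      ∑ m, f m x * g₁ m y z + ∑ m, f m y * g₂ m x z + ∑ m, f m z * g₃ m x y) :
    Fintype.card α ≤ 3 * Fintype.card M := by
  classical
  let L : (α → K) →ₗ[K] (M → K) := Matrix.mulVecLin (Matrix.of f)
  obtain ⟨h, hW, hh⟩ := eg_exists_support (LinearMap.ker L)
  have h1 := LinearMap.finrank_range_add_finrank_ker L
  have h2 : Module.finrank K (LinearMap.range L) ≤ Fintype.card M := by
    simpa using Submodule.finrank_le (LinearMap.range L)
  rw [Module.finrank_fintype_fun_eq_card] at h1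
  have hL : ∀ m, ∑ x, f m x * h x = 0 := fun m => congrFun (LinearMap.mem_ker.1 hW) m
  have hD : Matrix.diagonal h =
      (Matrix.of fun y m => f m y) * (Matrix.of fun m z => ∑ x, h x * g₂ m x z) +
      (Matrix.of fun y m => ∑ x, h x * g₃ m x y) * (Matrix.of fun m z => f m z) := by
    ext y z
    have e1 : Matrix.diagonal h y z = ∑ x, h x * (if x = y ∧ y = z then (1 : K) else 0) := by
      by_cases hyz : y = z
      · simp [hyz]
      · simp [hyz]
    rw [e1]
    simp only [H, mul_add, sum_add_distrib, Matrix.add_apply, Matrix.mul_apply, Matrix.of_apply]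
    have e2 : ∑ x, h x * ∑ m, f m x * g₁ m y z = 0 := by
      simp only [mul_sum]
      rw [sum_comm]
      apply sum_eq_zero
      intro m _
      have : ∑ x, h x * (f m x * g₁ m y z) = (∑ x, f m x * h x) * g₁ m y z := by
        rw [sum_mul]
        exact sum_congr rfl fun x _ => by ring
      rw [this, hL, zero_mul]
    rw [e2, zero_add]
    congr 1
    · simp only [mul_sum]
      rw [sum_comm]
      exact sum_congr rfl fun m _ => sum_congr rfl fun x _ => by ring
    · simp only [mul_sum, sum_mul]
      rw [sum_comm]
      exact sum_congr rfl fun m _ => sum_congr rfl fun x _ => by ring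
  have h3 : (Matrix.diagonal h).rank ≤ Fintype.card M + Fintype.card M := by
    rw [hD]
    refine (eg_rank_add _ _).trans (add_le_add ?_ ?_)
    · exact (Matrix.rank_mul_le_left _ _).trans (Matrix.rank_le_card_width _)
    · exact (Matrix.rank_mul_le_left _ _).trans (Matrix.rank_le_card_width _)
  rw [Matrix.rank_diagonal, Fintype.card_subtype] at h3
  omega

open Finset in
lemma eg_group {K α ι τ : Type*} [Field K] [DecidableEq ι] (P : Finset τ) (M : Finset ι)
    (c : τ → ι) (hc : ∀ t ∈ P, c t ∈ M) (f : ι → α → K) (x : α) (G : τ → K) :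
    ∑ t ∈ P, f (c t) x * G t = ∑ m : M, f m x * ∑ t ∈ P with c t = m, G t := by
  rw [← sum_fiberwise_of_maps_to hc]
  rw [← sum_coe_sort M]
  refine sum_congr rfl fun m _ => ?_
  rw [mul_sum]
  refine sum_congr rfl fun t ht => ?_
  rw [(mem_filter.1 ht).2]

open Finset in
/-- low degree monomials -/
def egMon (p : ℕ) (ι : Type*) [Fintype ι] [DecidableEq ι] : Finset (ι → ℕ) :=
  (Fintype.piFinset fun _ => range p).filter fun m => 3 * ∑ i, m i ≤ (p - 1) * Fintype.card ι

open Finset in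
lemma eg_poly (p : ℕ) (hp : p.Prime) (hp2 : 2 < p) :
    ∃ (T : Finset (Fin 3 → ℕ)) (C : (Fin 3 → ℕ) → ZMod p), (∀ t ∈ T, ∑ j, t j ≤ p - 1) ∧
      ∀ x y z : ZMod p, (if x + z = 2 * y then (1 : ZMod p) else 0) =
        ∑ t ∈ T, C t * (x ^ t 0 * y ^ t 1 * z ^ t 2) := by
  classical
  have := Fact.mk hp
  have h0 : (0 : Fin 3 → ℕ) ∉ piAntidiag (univ : Finset (Fin 3)) (p - 1) := by
    simp [mem_piAntidiag]; omega
  refine ⟨insert 0 (piAntidiag univ (p - 1)),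
    fun t => if t = 0 then 1 else - ((Nat.multinomial univ t : ZMod p) * (-2) ^ t 1), ?_, ?_⟩
  · intro t ht
    rcases mem_insert.1 ht with rfl | ht
    · simp
    · exact (mem_piAntidiag.1 ht).1.le
  · intro x y z
    rw [sum_insert h0]
    have h1 : (if x + z = 2 * y then (1 : ZMod p) else 0) =
        1 - (∑ j, ![x, -2 * y, z] j) ^ (p - 1) := by
      have e : ∑ j, ![x, -2 * y, z] j = x + z - 2 * y := by
        simp [Fin.sum_univ_three]; ring
      rw [e]
      split_ifs with h
      · rw [sub_eq_zero.2 h, zero_pow (by omega), sub_zero]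
      · rw [ZMod.pow_card_sub_one_eq_one (sub_ne_zero.2 h), sub_self]
    rw [h1, sum_pow_eq_sum_piAntidiag, sub_eq_add_neg, ← sum_neg_distrib]
    congr 1
    · simp
    · refine sum_congr rfl fun t ht => ?_
      have ht0 : t ≠ 0 := by
        rintro rfl
        exact h0 ht
      beta_reduce
      rw [if_neg ht0]
      rw [Fin.prod_univ_three]
      simp only [Matrix.cons_val, mul_pow]
      ring

open Finset in
lemma eg_main (p : ℕ) (hp : p.Prime) (hp2 : 2 < p) {α ι : Type*} [Fintype α] [DecidableEq α]
    [Fintype ι] [DecidableEq ι] (e : α → ι → ZMod p)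
    (he : ∀ x y z, (∀ i, e x i + e z i = 2 * e y i) → x = y ∧ y = z) :
    Fintype.card α ≤ 3 * (egMon p ι).card := by
  classical
  have := Fact.mk hp
  obtain ⟨T, C, hT, hC⟩ := eg_poly p hp hp2
  let P : Finset (ι → Fin 3 → ℕ) := Fintype.piFinset fun _ => T
  let f : (ι → ℕ) → α → ZMod p := fun m x => ∏ i, e x i ^ m i
  let c : Fin 3 → (ι → Fin 3 → ℕ) → ι → ℕ := fun j t i => t i j
  let D : (ι → Fin 3 → ℕ) → ZMod p := fun t => ∏ i, C (t i)
  have hPT : ∀ t ∈ P, ∀ i, ∑ j, t i j ≤ p - 1 := fun t ht i => hT _ (Fintype.mem_piFinset.1 ht i)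
  have key : ∀ x y z, (if x = y ∧ y = z then (1 : ZMod p) else 0) =
      ∑ t ∈ P, D t * (f (c 0 t) x * f (c 1 t) y * f (c 2 t) z) := by
    intro x y z
    have e1 : (if x = y ∧ y = z then (1 : ZMod p) else 0) =
        ∏ i, (if e x i + e z i = 2 * e y i then (1 : ZMod p) else 0) := by
      split_ifs with h
      · obtain ⟨rfl, rfl⟩ := h
        symm
        apply prod_eq_one
        intro i _
        rw [if_pos (by ring)]
      · have : ¬ ∀ i, e x i + e z i = 2 * e y i := fun h' => h (he x y z h')
        push Not at this
        obtain ⟨i, hi⟩ := this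
        symm
        exact prod_eq_zero (mem_univ i) (if_neg hi)
    rw [e1]
    simp only [hC]
    rw [prod_univ_sum]
    refine sum_congr rfl fun t _ => ?_
    simp only [D, f, c, prod_mul_distrib]
  have hmem : ∀ t ∈ P, ∀ j, 3 * ∑ i, t i j ≤ (p - 1) * Fintype.card ι → c j t ∈ egMon p ι := by
    intro t ht j hj
    refine mem_filter.2 ⟨Fintype.mem_piFinset.2 fun i => ?_, hj⟩
    have h1 := hPT t ht i
    have h2 : t i j ≤ ∑ j, t i j := single_le_sum (f := fun j => t i j) (fun _ _ => Nat.zero_le _) (mem_univ j)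
    simp only [c, mem_range]
    omega
  have hex : ∀ t ∈ P, c 0 t ∉ egMon p ι → c 1 t ∉ egMon p ι → c 2 t ∈ egMon p ι := by
    intro t ht h0 h1
    by_contra h2
    have h0' : ¬ 3 * ∑ i, t i 0 ≤ (p - 1) * Fintype.card ι := fun h => h0 (hmem t ht 0 h)
    have h1' : ¬ 3 * ∑ i, t i 1 ≤ (p - 1) * Fintype.card ι := fun h => h1 (hmem t ht 1 h)
    have h2' : ¬ 3 * ∑ i, t i 2 ≤ (p - 1) * Fintype.card ι := fun h => h2 (hmem t ht 2 h)
    have hs : ∑ i, ∑ j, t i j ≤ (p - 1) * Fintype.card ι := by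
      refine (sum_le_card_nsmul univ _ _ fun i _ => hPT t ht i).trans ?_
      simp [mul_comm]
    simp only [Fin.sum_univ_three, sum_add_distrib] at hs
    omega
  let P₁ := P.filter fun t => c 0 t ∈ egMon p ι
  let P' := P.filter fun t => c 0 t ∉ egMon p ι
  let P₂ := P'.filter fun t => c 1 t ∈ egMon p ι
  let P₃ := P'.filter fun t => c 1 t ∉ egMon p ι
  have := eg_slice (M := egMon p ι) (fun m => f m)
    (fun m y z => ∑ t ∈ P₁ with c 0 t = m, D t * f (c 1 t) y * f (c 2 t) z)
    (fun m x z => ∑ t ∈ P₂ with c 1 t = m, D t * f (c 0 t) x * f (c 2 t) z)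
    (fun m x y => ∑ t ∈ P₃ with c 2 t = m, D t * f (c 0 t) x * f (c 1 t) y) (by
      intro x y z
      rw [key, ← sum_filter_add_sum_filter_not P (fun t => c 0 t ∈ egMon p ι),
        ← sum_filter_add_sum_filter_not (P.filter fun t => c 0 t ∉ egMon p ι)
          (fun t => c 1 t ∈ egMon p ι), ← add_assoc]
      rw [← eg_group P₁ (egMon p ι) (c 0) (fun t ht => (mem_filter.1 ht).2) f x,
        ← eg_group P₂ (egMon p ι) (c 1) (fun t ht => (mem_filter.1 ht).2) f y,
        ← eg_group P₃ (egMon p ι) (c 2) (fun t ht => by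
          have h1 := mem_filter.1 ht
          have h2 := mem_filter.1 h1.1
          exact hex t h2.1 h2.2 h1.2) f z]
      refine congrArg₂ _ (congrArg₂ _ ?_ ?_) ?_ <;>
      exact sum_congr rfl fun t _ => by ring)
  simpa using this

open Finset in
lemma eg_count (p : ℕ) (hp2 : 2 < p) (ι : Type*) [Fintype ι] [DecidableEq ι] (x : ℝ)
    (hx0 : 0 < x) (hx1 : x < 1) :
    ((egMon p ι).card : ℝ) ≤
      (((1 - x ^ (p : ℝ)) / (1 - x)) * x ^ (-((p : ℝ) - 1) / 3)) ^ Fintype.card ι := by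
  have hg : (1 - x ^ (p : ℝ)) / (1 - x) = ∑ j ∈ range p, x ^ j := by
    rw [Real.rpow_natCast, geom_sum_eq hx1.ne, ← neg_sub 1 x, ← neg_sub 1 (x ^ p), neg_div_neg_eq]
  rw [hg, mul_pow, ← card_univ, ← prod_const, prod_univ_sum, sum_mul, card_eq_sum_ones,
    Nat.cast_sum]
  refine le_trans ?_ (sum_le_sum_of_subset_of_nonneg (filter_subset _ _ : egMon p ι ⊆ _)
    (fun m _ _ => by positivity))
  refine sum_le_sum fun m hm => ?_
  have h := (mem_filter.1 hm).2
  rw [prod_pow_eq_pow_sum, ← Real.rpow_natCast x, ← Real.rpow_natCast (x ^ _), ← Real.rpow_mul hx0.le,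
    ← Real.rpow_add hx0, Nat.cast_one]
  apply Real.one_le_rpow_of_pos_of_le_one_of_nonpos hx0 hx1.le
  have h' : (3 : ℝ) * ((∑ i, m i : ℕ) : ℝ) ≤ ((p : ℝ) - 1) * Fintype.card ι := by
    have := (Nat.cast_le (α := ℝ)).2 h
    push_cast [Nat.cast_sub (by omega : 1 ≤ p)] at this ⊢
    exact this
  rw [card_univ]
  linarith

lemma eg_tensor (a b : ℝ) (hb : 0 ≤ b) (h : ∀ k : ℕ, a ^ k ≤ 3 * b ^ k) : a ≤ b := by
  by_contra hab
  push Not at hab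
  rcases hb.eq_or_lt with rfl | hb
  · have := h 1
    simp at this
    linarith
  · have h1 : 1 < a / b := (one_lt_div hb).2 hab
    obtain ⟨k, hk⟩ := pow_unbounded_of_one_lt 3 h1
    rw [div_pow, lt_div_iff₀ (by positivity)] at hk
    linarith [h k]

theorem ellenberg_gijswijt_sunflowerFree_bound (p : ℕ) (hp : p.Prime) (hp2 : 2 < p)
    (n : ℕ) (hn : 1 ≤ n)
    (F : Finset (Fin n → ZMod p)) (hF : SunflowerFreeZMod p n F) :
    (F.card : ℝ) ≤ (egJ p * p) ^ n := by
  classical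
  have := Fact.mk hp
  have htwo : (2 : ZMod p) ≠ 0 := by
    intro h
    have : ((2 : ℕ) : ZMod p) = 0 := by exact_mod_cast h
    rw [ZMod.natCast_eq_zero_iff] at this
    exact absurd (Nat.le_of_dvd (by norm_num) this) (by omega)
  have hcoord : ∀ a b c : ZMod p, a + c = 2 * b → ¬ ExactlyTwoEq a b c := by
    rintro a b c h (⟨rfl, h2⟩ | ⟨rfl, h2⟩ | ⟨rfl, h2⟩)
    · exact h2 (by linear_combination -h)
    · exact h2 (mul_left_cancel₀ htwo (by linear_combination h))
    · exact h2 (by linear_combination h)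
  have hAP : ∀ x ∈ F, ∀ y ∈ F, ∀ z ∈ F, (∀ i, x i + z i = 2 * y i) → x = y ∧ y = z := by
    intro x hx y hy z hz h
    by_cases hxy : x = y
    · refine ⟨hxy, ?_⟩
      subst hxy
      funext i
      linear_combination - h i
    by_cases hyz : y = z
    · exfalso
      apply hxy
      subst hyz
      funext i
      linear_combination h i
    by_cases hxz : x = z
    · exfalso
      apply hxy
      subst hxz
      funext i
      exact mul_left_cancel₀ htwo (by linear_combination h i)
    obtain ⟨i, hi⟩ := hF x hx y hy z hz hxy hyz hxz
    exact absurd hi (hcoord _ _ _ (h i))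
  have hbound : ∀ x : ℝ, 0 < x → x < 1 →
      (F.card : ℝ) ≤ (((1 - x ^ (p : ℝ)) / (1 - x)) * x ^ (-((p : ℝ) - 1) / 3)) ^ n := by
    intro x hx0 hx1
    have hpos : 0 ≤ ((1 - x ^ (p : ℝ)) / (1 - x)) * x ^ (-((p : ℝ) - 1) / 3) := by
      have : x ^ (p : ℝ) ≤ 1 := Real.rpow_le_one hx0.le hx1.le (by positivity)
      exact mul_nonneg (div_nonneg (by linarith) (by linarith)) (by positivity)
    apply eg_tensor _ _ (pow_nonneg hpos n)
    intro k
    have h1 := eg_main p hp hp2 (α := Fin k → F) (ι := Fin k × Fin n)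
      (fun u i => (u i.1 : Fin n → ZMod p) i.2) (by
        intro u v w h
        have : ∀ j, u j = v j ∧ v j = w j := by
          intro j
          have := hAP _ (u j).2 _ (v j).2 _ (w j).2 (fun i => h (j, i))
          exact ⟨Subtype.ext this.1, Subtype.ext this.2⟩
        exact ⟨funext fun j => (this j).1, funext fun j => (this j).2⟩)
    have h2 := eg_count p hp2 (Fin k × Fin n) x hx0 hx1
    simp only [Fintype.card_fun, Fintype.card_coe, Fintype.card_fin, Fintype.card_prod] at h1 h2
    have h1' : (F.card : ℝ) ^ k ≤ 3 * ((egMon p (Fin k × Fin n)).card : ℝ) := by exact_mod_cast h1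
    rw [mul_comm k n, pow_mul] at h2
    linarith
  have hJ : egJ p * p = sInf {y : ℝ | ∃ x : ℝ, 0 < x ∧ x < 1 ∧
    y = ((1 - x ^ (p : ℝ)) / (1 - x)) * x ^ (-((p : ℝ) - 1) / 3)} := by
    have : (p : ℝ) ≠ 0 := by exact_mod_cast hp.ne_zero
    unfold egJ
    field_simp
  rw [hJ]
  have hroot : ((F.card : ℝ) ^ ((n : ℝ)⁻¹)) ^ n = F.card :=
    Real.rpow_inv_natCast_pow (by positivity) (by omega)
  rw [← hroot]
  apply pow_le_pow_left₀ (by positivity)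
  apply le_csInf
  · exact ⟨_, 1 / 2, by norm_num, by norm_num, rfl⟩
  · rintro y ⟨x, hx0, hx1, rfl⟩
    have hpos : 0 ≤ ((1 - x ^ (p : ℝ)) / (1 - x)) * x ^ (-((p : ℝ) - 1) / 3) := by
      have : x ^ (p : ℝ) ≤ 1 := Real.rpow_le_one hx0.le hx1.le (by positivity)
      exact mul_nonneg (div_nonneg (by linarith) (by linarith)) (by positivity)
    refine le_of_pow_le_pow_left₀ (by omega : n ≠ 0) hpos ?_
    rw [hroot]
    exact hbound x hx0 hx1
end

section
/- Let X be a finite set, k ≥ 1, and K ⊆ binom(X, k) a k-uniform family of subsets of X. Then there exists a subfamily G ⊆ K and a partition X = X_1 ⊕ … ⊕ X_k into k disjoint parts such that |G ∩ X_i| = 1 for every G ∈ G and every 1 ≤ i ≤ k, and |G| ≥ (k!/k^k)·|K|. -/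
open Classical in
theorem ek_count {β : Type*} [Fintype β] (k : ℕ) (p : β → Prop)
    (hp : Fintype.card {x // p x} = k) :
    k.factorial * Fintype.card (β → Fin k) = k ^ k *
      (Finset.univ.filter (fun c : β → Fin k =>
        Function.Injective (fun x : {x // p x} => c x))).card := by
  have e := Equiv.piEquivPiSubtypeProd p (fun _ : β => Fin k)
  have h1 : Fintype.card (β → Fin k) = k ^ k * Fintype.card ({x // ¬ p x} → Fin k) := by
    rw [Fintype.card_congr e, Fintype.card_prod]
    congr 1
    simp [hp]
  have h2 : (Finset.univ.filter (fun c : β → Fin k =>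
        Function.Injective (fun x : {x // p x} => c x))).card
        = k.factorial * Fintype.card ({x // ¬ p x} → Fin k) := by
    rw [← Fintype.card_subtype]
    have e2 : {c : β → Fin k // Function.Injective (fun x : {x // p x} => c x)} ≃
        {f : {x // p x} → Fin k // Function.Injective f} × ({x // ¬ p x} → Fin k) :=
      ((Equiv.piEquivPiSubtypeProd p (fun _ : β => Fin k)).subtypeEquiv
        (q := fun y => Function.Injective y.1) (fun c => Iff.rfl)).trans
        (Equiv.prodSubtypeFstEquivSubtypeProd (p := fun f : {x // p x} → Fin k => Function.Injective f))
    rw [Fintype.card_congr e2, Fintype.card_prod,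
      Fintype.card_congr (Equiv.subtypeInjectiveEquivEmbedding _ _), Fintype.card_embedding_eq]
    simp [hp, Nat.descFactorial_self]
  rw [h1, h2]; ring

theorem erdos_kleitman {α : Type*} [DecidableEq α] (X : Finset α) (k : ℕ)
    (hk : 1 ≤ k) (K : Finset (Finset α))
    (hK : ∀ A ∈ K, A ⊆ X ∧ A.card = k) :
    ∃ G ⊆ K, ∃ P : Fin k → Finset α,
      (∀ i j, i ≠ j → Disjoint (P i) (P j)) ∧
      X = Finset.univ.biUnion P ∧
      (∀ A ∈ G, ∀ i, (A ∩ P i).card = 1) ∧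
      (Nat.factorial k : ℝ) / (k : ℝ) ^ k * (K.card : ℝ) ≤ (G.card : ℝ) := by
  classical
  have hcard : ∀ A ∈ K, Fintype.card {x : X // x.1 ∈ A} = k := by
    intro A hA
    obtain ⟨h1, h2⟩ := hK A hA
    rw [← h2, ← Fintype.card_coe A]
    exact Fintype.card_congr
      ⟨fun x => ⟨x.1.1, x.2⟩, fun x => ⟨⟨x.1, h1 x.2⟩, x.2⟩, fun _ => rfl, fun _ => rfl⟩
  let good (c : X → Fin k) (A : Finset α) : Prop :=
    Function.Injective (fun x : {x : X // x.1 ∈ A} => c x)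
  obtain ⟨c, hc⟩ : ∃ c : X → Fin k, k.factorial * K.card ≤ k ^ k * (K.filter (good c)).card := by
    by_contra! hcon
    have : Nonempty (X → Fin k) := ⟨fun _ => ⟨0, hk⟩⟩
    have h := Finset.sum_lt_sum_of_nonempty (s := (Finset.univ : Finset (X → Fin k)))
      Finset.univ_nonempty (fun c _ => hcon c)
    rw [← Finset.mul_sum] at h
    have h3 : ∑ c : X → Fin k, (K.filter (good c)).card
        = ∑ A ∈ K, (Finset.univ.filter (fun c => good c A)).card := by
      simp only [Finset.card_filter]
      exact Finset.sum_comm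
    have h4 : ∀ A ∈ K, k ^ k * (Finset.univ.filter (fun c => good c A)).card
        = k.factorial * Fintype.card (X → Fin k) := by
      intro A hA
      have hA' := hcard A hA
      have := ek_count k (fun x : X => x.1 ∈ A) (by convert hA')
      symm
      convert this
    rw [h3, Finset.mul_sum, Finset.sum_congr rfl h4] at h
    simp only [Finset.sum_const, smul_eq_mul, Finset.card_univ] at h
    apply h.ne; ring
  refine ⟨K.filter (good c), Finset.filter_subset _ _,
    fun i => X.filter (fun x => ∃ h : x ∈ X, c ⟨x, h⟩ = i), ?_, ?_, ?_, ?_⟩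
  · intro i j hij
    rw [Finset.disjoint_left]
    intro x hx hy
    simp only [Finset.mem_filter] at hx hy
    obtain ⟨_, _, h1⟩ := hx
    obtain ⟨_, _, h2⟩ := hy
    exact hij (h1.symm.trans h2)
  · ext x
    simp only [Finset.mem_biUnion, Finset.mem_filter, Finset.mem_univ, true_and]
    exact ⟨fun h => ⟨_, h, h, rfl⟩, fun ⟨_, h, _⟩ => h⟩
  · intro A hA i
    obtain ⟨hAK, hinj⟩ := Finset.mem_filter.1 hA
    have hb := (Fintype.bijective_iff_injective_and_card _).2
      ⟨hinj, (hcard A hAK).trans (Fintype.card_fin k).symm⟩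
    obtain ⟨⟨⟨a, haX⟩, haA⟩, ha⟩ := hb.2 i
    rw [Finset.card_eq_one]
    refine ⟨a, ?_⟩
    ext y
    simp only [Finset.mem_inter, Finset.mem_filter, Finset.mem_singleton]
    constructor
    · rintro ⟨hyA, _, hyX, hy⟩
      have := @hinj ⟨⟨y, hyX⟩, hyA⟩ ⟨⟨a, haX⟩, haA⟩ (hy.trans ha.symm)
      simpa using this
    · rintro rfl
      exact ⟨haA, haX, haX, ha⟩
  · have hkpos : (0 : ℝ) < (k : ℝ) ^ k := by
      have : (0 : ℝ) < k := by exact_mod_cast hk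
      positivity
    rw [div_mul_eq_mul_div, div_le_iff₀ hkpos, mul_comm ((K.filter (good c)).card : ℝ)]
    exact_mod_cast hc
end
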